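/- arXiv:2101.10176 — 5 statements merged into one kernel-verified Lean document; each statement's English description precedes it below -/
import Mathlib

section
/- Let n be an integer with n > 3 and let r > 0. Suppose λ ∈ ℝ is a Dirichlet eigenvalue of the Schrödinger operator −d²/dt² + V₁ on [0,r], i.e. there exists a function u, not identically zero, continuously differentiable on [0,r] and twice differentiable on (0,r), with u(0) = u(r) = 0 and −u''(t) + ((n−1)/4)·(n−1 + (n−3)/sinh²(t))·u(t) = λ·u(t) for all t ∈ (0,r). Then λ > (n−1)²/4 + π²/r² + (n−1)(n−3)/(4·sinh²(r)). -/
/-- `lam` is a Dirichlet eigenvalue of the Schrödinger operator `-d²/dt² + V` on `[0, r]`: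
there is a function `u`, not identically zero on `[0, r]`, continuously differentiable on
`[0, r]` and twice differentiable on `(0, r)`, vanishing at `0` and `r`, with
`-u'' + V·u = lam·u` on `(0, r)`. -/
def IsDirichletEigenvalue (V : ℝ → ℝ) (r lam : ℝ) : Prop :=
  ∃ u : ℝ → ℝ,
    (∃ t ∈ Set.Icc (0:ℝ) r, u t ≠ 0) ∧
    ContinuousOn u (Set.Icc 0 r) ∧
    (∀ t ∈ Set.Ioo (0:ℝ) r, DifferentiableAt ℝ u t) ∧
    ContinuousOn (deriv u) (Set.Icc 0 r) ∧
    (∀ t ∈ Set.Ioo (0:ℝ) r, DifferentiableAt ℝ (deriv u) t) ∧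
    u 0 = 0 ∧ u r = 0 ∧
    (∀ t ∈ Set.Ioo (0:ℝ) r, -(deriv (deriv u) t) + V t * u t = lam * u t)

/-- The potential `V₁(t) = ((n−1)/4)·(n−1 + (n−3)/sinh² t)` arising from the radial ODE for
the first Dirichlet eigenvalue of the geodesic ball in `ℍⁿ`. -/
noncomputable def V1 (n : ℕ) (t : ℝ) : ℝ :=
  ((n : ℝ) - 1) / 4 * (((n : ℝ) - 1) + ((n : ℝ) - 3) / (Real.sinh t) ^ 2)

/-!
Subtracting a constant lower bound of the potential, the theorem is Sturm's comparison of the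
eigenfunction `u` with `y t = sin (π t / r)`: were the eigenvalue too small, `y` would oscillate
strictly faster than `u` and so vanish inside `(0, r)`. The comparison rests on Picone's identity:
if `u'' = q u` and `y'' = p y`, then `u u' - (u ^ 2 / y) y'` has derivative
`(u' - (u / y) y') ^ 2 + (q - p) u ^ 2`. At a common zero of `u` and `y` it still tends to `0`,
since `u / y` tends to a ratio of derivatives.
-/

open Set Filter Topology

section Derivatives

theorem hasDerivWithinAt_Icc_of_continuousOn_deriv {E : Type*} [NormedAddCommGroup E]
    [NormedSpace ℝ E] {f f' : ℝ → E} {a b : ℝ} (hab : a < b) (hf : ContinuousOn f (Icc a b))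
    (hf' : ContinuousOn f' (Icc a b)) (hderiv : ∀ t ∈ Ioo a b, HasDerivAt f (f' t) t) :
    ∀ t ∈ Icc a b, HasDerivWithinAt f (f' t) (Icc a b) t := by
  intro t ht
  rw [hasDerivWithinAt_iff_hasFDerivWithinAt, ← closure_Ioo hab.ne]
  refine hasFDerivWithinAt_closure_of_tendsto_fderiv
    (fun x hx => (hderiv x hx).differentiableAt.differentiableWithinAt)
    (convex_Ioo a b) isOpen_Ioo
    (fun x hx => (hf x (by rwa [closure_Ioo hab.ne] at hx)).mono Ioo_subset_Icc_self) ?_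
  have hlim : Tendsto (fun x => ContinuousLinearMap.toSpanSingleton ℝ (f' x)) (𝓝[Ioo a b] t)
      (𝓝 (ContinuousLinearMap.toSpanSingleton ℝ (f' t))) :=
    (ContinuousLinearMap.toSpanSingletonCLE.continuous.tendsto _).comp
      ((hf' t ht).mono Ioo_subset_Icc_self)
  refine hlim.congr' ?_
  filter_upwards [self_mem_nhdsWithin] with x hx
  exact (hderiv x hx).hasFDerivAt.fderiv.symm

theorem tendsto_div_of_hasDerivWithinAt {𝕜 : Type*} [NontriviallyNormedField 𝕜] {f g : 𝕜 → 𝕜}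
    {f' g' a : 𝕜} {s : Set 𝕜} (hf : HasDerivWithinAt f f' s a) (hg : HasDerivWithinAt g g' s a)
    (hfa : f a = 0) (hga : g a = 0) (hg' : g' ≠ 0) :
    Tendsto (fun x => f x / g x) (𝓝[s \ {a}] a) (𝓝 (f' / g')) := by
  refine ((hasDerivWithinAt_iff_tendsto_slope.1 hf).div
    (hasDerivWithinAt_iff_tendsto_slope.1 hg) hg').congr' ?_
  filter_upwards [self_mem_nhdsWithin] with x hx
  have hxa : x - a ≠ 0 := sub_ne_zero.2 hx.2
  simp only [Pi.div_apply, slope_def_field, hfa, hga, sub_zero]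
  exact div_div_div_cancel_right₀ hxa _ _

theorem hasDerivAt_eq_zero_of_nonneg_of_tendsto {f f' : ℝ → ℝ} {a b l : ℝ}
    (hf : ∀ t ∈ Ioo a b, HasDerivAt f (f' t) t) (hf' : ∀ t ∈ Ioo a b, 0 ≤ f' t)
    (ha : Tendsto f (𝓝[>] a) (𝓝 l)) (hb : Tendsto f (𝓝[<] b) (𝓝 l)) :
    ∀ t ∈ Ioo a b, f' t = 0 := by
  have hmono : MonotoneOn f (Ioo a b) :=
    monotoneOn_of_hasDerivWithinAt_nonneg (f' := f') (convex_Ioo a b)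
      (fun t ht => (hf t ht).continuousAt.continuousWithinAt)
      (by simpa only [interior_Ioo] using fun t ht => (hf t ht).hasDerivWithinAt)
      (by simpa only [interior_Ioo] using hf')
  have hconst : ∀ t ∈ Ioo a b, f t = l := by
    intro t ht
    apply le_antisymm
    · refine ge_of_tendsto hb ?_
      filter_upwards [Ioo_mem_nhdsLT ht.2] with x hx
      exact hmono ht ⟨ht.1.trans hx.1, hx.2⟩ hx.1.le
    · refine le_of_tendsto ha ?_
      filter_upwards [Ioo_mem_nhdsGT ht.1] with x hx
      exact hmono ⟨hx.1, hx.2.trans ht.2⟩ ht hx.2.le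
  intro t ht
  have heq : f =ᶠ[𝓝 t] fun _ => l := by
    filter_upwards [Ioo_mem_nhds ht.1 ht.2] with x hx using hconst x hx
  exact (hf t ht).unique ((hasDerivAt_const t l).congr_of_eventuallyEq heq)

end Derivatives

section Picone

variable {𝕜 : Type*} [NontriviallyNormedField 𝕜] {u u' y y' : 𝕜 → 𝕜}

/-- Picone's function `u u' - (u ^ 2 / y) y'` of two functions `u`, `y` with derivatives `u'`, `y'`,
which compares solutions of two linear second order equations. It is meaningful where `y` does
not vanish. -/
def picone (u u' y y' : 𝕜 → 𝕜) (t : 𝕜) : 𝕜 :=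
  u t * (u' t - u t / y t * y' t)

theorem hasDerivAt_picone {q p t : 𝕜} (hu : HasDerivAt u (u' t) t)
    (hu' : HasDerivAt u' (q * u t) t) (hy : HasDerivAt y (y' t) t)
    (hy' : HasDerivAt y' (p * y t) t) (hyt : y t ≠ 0) :
    HasDerivAt (picone u u' y y') ((u' t - u t / y t * y' t) ^ 2 + (q - p) * u t ^ 2) t := by
  refine (hu.mul (hu'.sub ((hu.div hy hyt).mul hy'))).congr_deriv ?_
  simp only [Pi.sub_apply, Pi.mul_apply, Pi.div_apply]
  field_simp
  ring

theorem tendsto_picone_zero {s : Set 𝕜} {a : 𝕜} (hu : HasDerivWithinAt u (u' a) s a)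
    (hu' : ContinuousWithinAt u' s a) (hy : HasDerivWithinAt y (y' a) s a)
    (hy' : ContinuousWithinAt y' s a) (hua : u a = 0) (hya : y a ≠ 0 ∨ y' a ≠ 0) :
    Tendsto (picone u u' y y') (𝓝[s \ {a}] a) (𝓝 0) := by
  have hle : 𝓝[s \ {a}] a ≤ 𝓝[s] a := nhdsWithin_mono a sdiff_subset
  obtain ⟨l, hquot⟩ : ∃ l, Tendsto (fun t => u t / y t) (𝓝[s \ {a}] a) (𝓝 l) := by
    by_cases hy0 : y a = 0
    · exact ⟨_, tendsto_div_of_hasDerivWithinAt hu hy hua hy0 (hya.resolve_left (not_not.2 hy0))⟩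
    · exact ⟨_, (hu.continuousWithinAt.div hy.continuousWithinAt hy0).tendsto.mono_left hle⟩
  have hlim := (hu.continuousWithinAt.mono_left hle).mul
    ((hu'.mono_left hle).sub (hquot.mul (hy'.mono_left hle)))
  rwa [hua, zero_mul] at hlim

end Picone

/-- `u` solves the linear equation `u'' = q u` on `[a, b]` and is `C¹` up to the endpoints. The
derivative `u'` is explicit data; at the endpoints it is the one-sided derivative. -/
structure IsSolutionOnIcc (q u u' : ℝ → ℝ) (a b : ℝ) : Prop where
  hasDerivWithinAt : ∀ t ∈ Icc a b, HasDerivWithinAt u (u' t) (Icc a b) t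
  continuousOn_deriv : ContinuousOn u' (Icc a b)
  hasDerivAt_deriv : ∀ t ∈ Ioo a b, HasDerivAt u' (q t * u t) t

namespace IsSolutionOnIcc

variable {q p u u' y y' : ℝ → ℝ} {a b : ℝ}

theorem hasDerivAt (hu : IsSolutionOnIcc q u u' a b) {t : ℝ} (ht : t ∈ Ioo a b) :
    HasDerivAt u (u' t) t :=
  (hu.hasDerivWithinAt t (Ioo_subset_Icc_self ht)).hasDerivAt (Icc_mem_nhds ht.1 ht.2)

theorem tendsto_picone (hu : IsSolutionOnIcc q u u' a b) (hy : IsSolutionOnIcc p y y' a b)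
    {t : ℝ} (ht : t ∈ Icc a b) (hut : u t = 0) (hyt : y t ≠ 0 ∨ y' t ≠ 0) :
    Tendsto (picone u u' y y') (𝓝[Icc a b \ {t}] t) (𝓝 0) :=
  tendsto_picone_zero (hu.hasDerivWithinAt t ht) (hu.continuousOn_deriv t ht)
    (hy.hasDerivWithinAt t ht) (hy.continuousOn_deriv t ht) hut hyt

/-- The **Sturm–Picone comparison theorem**. -/
theorem exists_eq_zero_of_lt (hu : IsSolutionOnIcc q u u' a b) (hy : IsSolutionOnIcc p y y' a b)
    (hpq : ∀ t ∈ Ioo a b, p t < q t) (hu0 : ∃ t ∈ Icc a b, u t ≠ 0) (hua : u a = 0)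
    (hub : u b = 0) (hya : y a ≠ 0 ∨ y' a ≠ 0) (hyb : y b ≠ 0 ∨ y' b ≠ 0) :
    ∃ t ∈ Ioo a b, y t = 0 := by
  by_contra! hy0
  obtain ⟨t, ht, hut⟩ := hu0
  have hat : a < t := ht.1.lt_of_ne (by rintro rfl; exact hut hua)
  have htb : t < b := ht.2.lt_of_ne (by rintro rfl; exact hut hub)
  have hab : a < b := hat.trans htb
  have hlim_a : Tendsto (picone u u' y y') (𝓝[>] a) (𝓝 0) := by
    simpa only [Icc_sdiff_left, nhdsWithin_Ioc_eq_nhdsGT hab]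
      using hu.tendsto_picone hy (left_mem_Icc.2 hab.le) hua hya
  have hlim_b : Tendsto (picone u u' y y') (𝓝[<] b) (𝓝 0) := by
    simpa only [Icc_sdiff_right, nhdsWithin_Ico_eq_nhdsLT hab]
      using hu.tendsto_picone hy (right_mem_Icc.2 hab.le) hub hyb
  have hderiv_zero := hasDerivAt_eq_zero_of_nonneg_of_tendsto
    (fun x hx => hasDerivAt_picone (hu.hasDerivAt hx) (hu.hasDerivAt_deriv x hx)
      (hy.hasDerivAt hx) (hy.hasDerivAt_deriv x hx) (hy0 x hx))
    (fun x hx => add_nonneg (sq_nonneg _)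
      (mul_nonneg (sub_nonneg.2 (hpq x hx).le) (sq_nonneg _)))
    hlim_a hlim_b t ⟨hat, htb⟩
  have hpos : 0 < (q t - p t) * u t ^ 2 :=
    mul_pos (sub_pos.2 (hpq t ⟨hat, htb⟩)) (sq_pos_of_ne_zero hut)
  exact (add_pos_of_nonneg_of_pos (sq_nonneg _) hpos).ne' hderiv_zero

end IsSolutionOnIcc

theorem isSolutionOnIcc_sin (k a b : ℝ) :
    IsSolutionOnIcc (fun _ => -k ^ 2) (fun t => Real.sin (k * t))
      (fun t => k * Real.cos (k * t)) a b := by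
  have hlin (t : ℝ) : HasDerivAt (fun t => k * t) k t := by
    simpa using (hasDerivAt_id t).const_mul k
  refine ⟨fun t _ => ?_, by fun_prop, fun t _ => ?_⟩
  · exact ((hlin t).sin.congr_deriv (mul_comm _ _)).hasDerivWithinAt
  · exact ((hlin t).cos.const_mul k).congr_deriv (by ring)

theorem sin_pi_div_mul_pos {r t : ℝ} (ht : t ∈ Ioo 0 r) : 0 < Real.sin (Real.pi / r * t) := by
  have hr : 0 < r := ht.1.trans ht.2
  apply Real.sin_pos_of_pos_of_lt_pi
  · exact mul_pos (div_pos Real.pi_pos hr) ht.1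
  · rw [div_mul_eq_mul_div, div_lt_iff₀ hr]
    exact mul_lt_mul_of_pos_left ht.2 Real.pi_pos

namespace IsDirichletEigenvalue

variable {V : ℝ → ℝ} {r lam : ℝ}

theorem pos (h : IsDirichletEigenvalue V r lam) : 0 < r := by
  obtain ⟨u, ⟨t, ht, hut⟩, -, -, -, -, hu0, -⟩ := h
  exact (ht.1.lt_of_ne (by rintro rfl; exact hut hu0)).trans_le ht.2

theorem exists_isSolutionOnIcc (h : IsDirichletEigenvalue V r lam) :
    ∃ u u' : ℝ → ℝ, IsSolutionOnIcc (fun t => V t - lam) u u' 0 r ∧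
      (∃ t ∈ Icc 0 r, u t ≠ 0) ∧ u 0 = 0 ∧ u r = 0 := by
  have hr := h.pos
  obtain ⟨u, hne, hcont, hdiff, hcont', hdiff', hu0, hur, hode⟩ := h
  refine ⟨u, deriv u, ⟨?_, hcont', fun t ht => ?_⟩, hne, hu0, hur⟩
  · exact hasDerivWithinAt_Icc_of_continuousOn_deriv hr hcont hcont'
      fun t ht => (hdiff t ht).hasDerivAt
  · exact (hdiff' t ht).hasDerivAt.congr_deriv (by linear_combination -hode t ht)

theorem add_pi_sq_div_sq_lt {c : ℝ} (h : IsDirichletEigenvalue V r lam)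
    (hV : ∀ t ∈ Ioo 0 r, c < V t) : c + Real.pi ^ 2 / r ^ 2 < lam := by
  by_contra! hlam
  obtain ⟨u, u', hu, hne, hu0, hur⟩ := h.exists_isSolutionOnIcc
  have hr := h.pos
  have hk : Real.pi / r ≠ 0 := (div_pos Real.pi_pos hr).ne'
  have hfaster : ∀ t ∈ Ioo 0 r, -(Real.pi / r) ^ 2 < V t - lam := fun t ht => by
    rw [div_pow]
    linarith [hV t ht]
  obtain ⟨t, ht, hsin⟩ := hu.exists_eq_zero_of_lt (isSolutionOnIcc_sin (Real.pi / r) 0 r)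
    hfaster hne hu0 hur (.inr (by simpa using hk))
    (.inr (by rw [div_mul_cancel₀ _ hr.ne', Real.cos_pi]; simpa using hk))
  exact (sin_pi_div_mul_pos ht).ne' hsin

end IsDirichletEigenvalue

theorem V1_eq (n : ℕ) (t : ℝ) :
    V1 n t = ((n : ℝ) - 1) ^ 2 / 4 + ((n : ℝ) - 1) * ((n : ℝ) - 3) / (4 * Real.sinh t ^ 2) := by
  rw [V1, ← div_div]
  ring

theorem strictAntiOn_V1 {n : ℕ} (hn : 3 < n) : StrictAntiOn (V1 n) (Ioi 0) := by
  intro s hs t _ hst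
  have hn' : (3 : ℝ) < n := mod_cast hn
  have hcoeff : 0 < ((n : ℝ) - 1) * ((n : ℝ) - 3) := mul_pos (by linarith) (by linarith)
  have hsinh_pos : 0 < Real.sinh s := Real.sinh_pos_iff.2 hs
  have hsinh_lt : Real.sinh s < Real.sinh t := Real.sinh_lt_sinh.2 hst
  rw [V1_eq, V1_eq]
  gcongr

/-- For `n > 3`, any Dirichlet eigenvalue of `-d²/dt² + V₁` on `[0, r]` satisfies
`λ > (n−1)²/4 + π²/r² + (n−1)(n−3)/(4 sinh² r)`. -/
theorem dirichlet_eigenvalue_V1_lower_bound (n : ℕ) (hn : 3 < n) (r : ℝ) (hr : 0 < r)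
    (lam : ℝ) (h : IsDirichletEigenvalue (V1 n) r lam) :
    ((n : ℝ) - 1) ^ 2 / 4 + Real.pi ^ 2 / r ^ 2
      + ((n : ℝ) - 1) * ((n : ℝ) - 3) / (4 * (Real.sinh r) ^ 2) < lam := by
  have hbound := h.add_pi_sq_div_sq_lt fun t ht => strictAntiOn_V1 hn ht.1 hr ht.2
  rw [V1_eq] at hbound
  linarith
end

section
/- Let n ≥ 2 be an integer and r > 0. Suppose λ ∈ ℝ admits a nonzero function u, continuously differentiable on [0,r] and twice differentiable on (0,r), with u(0) = u(r) = 0 and −u''(t) + ((n−1)/4)·(n−1 + (n+1)/sinh²(t))·u(t) = λ·u(t) for all t ∈ (0,r). Then λ ≥ (n−1)²/4 + π²/r² + (n²−1)/(4·sinh²(r)). -/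
/-- The potential `V₂(t) = ((n−1)/4)·(n−1 + (n+1)/sinh² t)` arising from the radial ODE for
the second Dirichlet eigenvalue of the geodesic ball in `ℍⁿ`. -/
noncomputable def V2 (n : ℕ) (t : ℝ) : ℝ :=
  ((n : ℝ) - 1) / 4 * (((n : ℝ) - 1) + ((n : ℝ) + 1) / (Real.sinh t) ^ 2)

/-!
Barta's method: if a positive `φ` satisfies `-φ'' + V φ ≥ μ φ` on an interval, then `μ` is a lower
bound for the Dirichlet eigenvalues of `-d²/dt² + V` there. Indeed, the smallest
multiple `M φ` lying above an eigenfunction `u` (with `u > 0` somewhere) touches it at an interior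
point, where `u'' ≤ M φ''`; inserting the equations for `u` and `φ` gives `μ ≤ λ`.

If `V ≥ c` on an interval of length `ℓ`, the cosine of frequency `k < π / ℓ` centred at the midpoint
is such a `φ`, with `μ = c + k²`, and letting `k` tend to `π / ℓ` gives `c + (π / ℓ)² ≤ λ`. On
`(0, r)` the potential `V₂` is decreasing, so `c = V₂(r)` is admissible.
-/

open Set Filter Topology

theorem deriv_deriv_nonpos_of_isLocalMax {f : ℝ → ℝ} {x : ℝ} (hmax : IsLocalMax f x)
    (hf : ContinuousAt f x) : deriv (deriv f) x ≤ 0 := by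
  by_contra! hpos
  have hmin : IsLocalMin f x := isLocalMin_of_deriv_deriv_pos hpos hmax.deriv_eq_zero hf
  have hconst : f =ᶠ[𝓝 x] fun _ ↦ f x := by
    filter_upwards [hmax, hmin] with y hle hge using le_antisymm hle hge
  simp [hconst.deriv.deriv_eq] at hpos

theorem deriv_deriv_le_of_eventuallyLE_of_eq {f g : ℝ → ℝ} {x : ℝ}
    (hf : ∀ᶠ y in 𝓝 x, DifferentiableAt ℝ f y) (hf' : DifferentiableAt ℝ (deriv f) x)
    (hg : ∀ᶠ y in 𝓝 x, DifferentiableAt ℝ g y) (hg' : DifferentiableAt ℝ (deriv g) x)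
    (hle : f ≤ᶠ[𝓝 x] g) (heq : f x = g x) : deriv (deriv f) x ≤ deriv (deriv g) x := by
  have hmax : IsLocalMax (f - g) x := by
    filter_upwards [hle] with y hy
    simpa [heq] using hy
  have hderiv : deriv (f - g) =ᶠ[𝓝 x] deriv f - deriv g := by
    filter_upwards [hf, hg] with y hfy hgy using deriv_sub hfy hgy
  have hnonpos := deriv_deriv_nonpos_of_isLocalMax hmax
    (hf.self_of_nhds.sub hg.self_of_nhds).continuousAt
  rw [hderiv.deriv_eq, deriv_sub hf' hg'] at hnonpos
  exact sub_nonpos.mp hnonpos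

theorem exists_pos_mul_touching_of_isCompact {X : Type*} [TopologicalSpace X] {K : Set X}
    (hK : IsCompact K) {u φ : X → ℝ} (hu : ContinuousOn u K) (hφ : ContinuousOn φ K)
    (hφpos : ∀ x ∈ K, 0 < φ x) (hupos : ∃ x ∈ K, 0 < u x) :
    ∃ M > 0, ∃ x ∈ K, u x = M * φ x ∧ ∀ y ∈ K, u y ≤ M * φ y := by
  obtain ⟨z, hz, huz⟩ := hupos
  obtain ⟨x, hx, hmax⟩ :=
    hK.exists_isMaxOn ⟨z, hz⟩ (hu.div hφ fun y hy ↦ (hφpos y hy).ne')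
  refine ⟨u x / φ x, (div_pos huz (hφpos z hz)).trans_le (hmax hz), x, hx,
    (div_mul_cancel₀ _ (hφpos x hx).ne').symm, fun y hy ↦ ?_⟩
  exact (div_le_iff₀ (hφpos y hy)).mp (hmax hy)

section Barta

variable {V u φ : ℝ → ℝ} {a b c lam μ : ℝ}

theorem le_of_subsolution_of_pos_supersolution
    (hu : ContinuousOn u (Icc a b)) (hu' : ∀ t ∈ Ioo a b, DifferentiableAt ℝ u t)
    (hu'' : ∀ t ∈ Ioo a b, DifferentiableAt ℝ (deriv u) t) (hua : u a ≤ 0) (hub : u b ≤ 0)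
    (hupos : ∃ t ∈ Icc a b, 0 < u t)
    (hsub : ∀ t ∈ Ioo a b, -deriv (deriv u) t + V t * u t ≤ lam * u t)
    (hφ : ContinuousOn φ (Icc a b)) (hφ' : ∀ t ∈ Ioo a b, DifferentiableAt ℝ φ t)
    (hφ'' : ∀ t ∈ Ioo a b, DifferentiableAt ℝ (deriv φ) t) (hφpos : ∀ t ∈ Icc a b, 0 < φ t)
    (hsuper : ∀ t ∈ Ioo a b, μ * φ t ≤ -deriv (deriv φ) t + V t * φ t) :
    μ ≤ lam := by
  obtain ⟨M, hM, t, ht, htouch, habove⟩ :=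
    exists_pos_mul_touching_of_isCompact isCompact_Icc hu hφ hφpos hupos
  have hut : 0 < u t := htouch ▸ mul_pos hM (hφpos t ht)
  have hta : a ≠ t := by rintro rfl; exact hut.not_ge hua
  have htb : t ≠ b := by rintro rfl; exact hut.not_ge hub
  have ht' : t ∈ Ioo a b := ⟨ht.1.lt_of_ne hta, ht.2.lt_of_ne htb⟩
  have hnhds : Ioo a b ∈ 𝓝 t := isOpen_Ioo.mem_nhds ht'
  have hderiv : deriv (fun s ↦ M * φ s) = fun s ↦ M * deriv φ s := by
    ext s; exact deriv_const_mul_field M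
  have hsecond : deriv (deriv u) t ≤ M * deriv (deriv φ) t := by
    have h := deriv_deriv_le_of_eventuallyLE_of_eq (g := fun s ↦ M * φ s)
      (eventually_of_mem hnhds hu') (hu'' t ht')
      (eventually_of_mem hnhds fun s hs ↦ (hφ' s hs).const_mul M)
      (hderiv ▸ (hφ'' t ht').const_mul M)
      (eventually_of_mem hnhds fun s hs ↦ habove s (Ioo_subset_Icc_self hs)) htouch
    rwa [hderiv, deriv_const_mul_field] at h
  refine le_of_mul_le_mul_right ?_ hut
  calc
    μ * u t = M * (μ * φ t) := by rw [htouch]; ring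
    _ ≤ M * (-deriv (deriv φ) t + V t * φ t) := by gcongr; exact hsuper t ht'
    _ = -(M * deriv (deriv φ) t) + V t * u t := by rw [htouch]; ring
    _ ≤ -deriv (deriv u) t + V t * u t := by gcongr
    _ ≤ lam * u t := hsub t ht'

/-- `u` is an eigenfunction, with eigenvalue `lam`, of the Schrödinger operator `-d²/dt² + V` on
`[a, b]` with Dirichlet boundary conditions, in the classical sense. Only continuity is required at
the endpoints: the derivative of `u` need not extend to them. -/
structure IsDirichletEigenfunction (V : ℝ → ℝ) (lam a b : ℝ) (u : ℝ → ℝ) : Prop where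
  exists_ne_zero : ∃ t ∈ Icc a b, u t ≠ 0
  continuousOn : ContinuousOn u (Icc a b)
  differentiableAt : ∀ t ∈ Ioo a b, DifferentiableAt ℝ u t
  differentiableAt_deriv : ∀ t ∈ Ioo a b, DifferentiableAt ℝ (deriv u) t
  left_eq_zero : u a = 0
  right_eq_zero : u b = 0
  ode : ∀ t ∈ Ioo a b, -deriv (deriv u) t + V t * u t = lam * u t

namespace IsDirichletEigenfunction

theorem neg (h : IsDirichletEigenfunction V lam a b u) :
    IsDirichletEigenfunction V lam a b (-u) where
  exists_ne_zero := by simpa using h.exists_ne_zero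
  continuousOn := h.continuousOn.neg
  differentiableAt t ht := (h.differentiableAt t ht).neg
  differentiableAt_deriv t ht := by
    rw [deriv.neg']
    exact (h.differentiableAt_deriv t ht).neg
  left_eq_zero := by simp [h.left_eq_zero]
  right_eq_zero := by simp [h.right_eq_zero]
  ode t ht := by
    simp only [deriv.neg', deriv.fun_neg, Pi.neg_apply]
    linarith [h.ode t ht]

theorem exists_pos_or_exists_neg_pos (h : IsDirichletEigenfunction V lam a b u) :
    (∃ t ∈ Icc a b, 0 < u t) ∨ ∃ t ∈ Icc a b, 0 < (-u) t := by
  obtain ⟨t, ht, hut⟩ := h.exists_ne_zero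
  rcases hut.lt_or_gt with hneg | hpos
  · exact .inr ⟨t, ht, neg_pos.mpr hneg⟩
  · exact .inl ⟨t, ht, hpos⟩

theorem left_lt_right (h : IsDirichletEigenfunction V lam a b u) : a < b := by
  obtain ⟨t, ht, hut⟩ := h.exists_ne_zero
  refine (ht.1.trans ht.2).lt_of_ne fun hab ↦ hut ?_
  subst hab
  rw [← le_antisymm ht.1 ht.2, h.left_eq_zero]

theorem le_of_pos_supersolution (h : IsDirichletEigenfunction V lam a b u)
    (hφ : ContinuousOn φ (Icc a b)) (hφ' : ∀ t ∈ Ioo a b, DifferentiableAt ℝ φ t)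
    (hφ'' : ∀ t ∈ Ioo a b, DifferentiableAt ℝ (deriv φ) t) (hφpos : ∀ t ∈ Icc a b, 0 < φ t)
    (hsuper : ∀ t ∈ Ioo a b, μ * φ t ≤ -deriv (deriv φ) t + V t * φ t) :
    μ ≤ lam := by
  have of_pos {v : ℝ → ℝ} (hv : IsDirichletEigenfunction V lam a b v)
      (hvpos : ∃ t ∈ Icc a b, 0 < v t) : μ ≤ lam :=
    le_of_subsolution_of_pos_supersolution hv.continuousOn hv.differentiableAt
      hv.differentiableAt_deriv hv.left_eq_zero.le hv.right_eq_zero.le hvpos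
      (fun t ht ↦ (hv.ode t ht).le) hφ hφ' hφ'' hφpos hsuper
  exact h.exists_pos_or_exists_neg_pos.elim (of_pos h) (of_pos h.neg)

end IsDirichletEigenfunction

theorem hasDerivAt_mul_sub_const (k m t : ℝ) : HasDerivAt (fun t ↦ k * (t - m)) k t := by
  simpa using ((hasDerivAt_id t).sub_const m).const_mul k

theorem deriv_cos_mul_sub (k m : ℝ) :
    deriv (fun t ↦ Real.cos (k * (t - m))) = fun t ↦ -k * Real.sin (k * (t - m)) := by
  ext t
  rw [(hasDerivAt_mul_sub_const k m t).cos.deriv]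
  ring

theorem deriv_deriv_cos_mul_sub (k m : ℝ) :
    deriv (deriv fun t ↦ Real.cos (k * (t - m))) = fun t ↦ -k ^ 2 * Real.cos (k * (t - m)) := by
  rw [deriv_cos_mul_sub]
  ext t
  rw [((hasDerivAt_mul_sub_const k m t).sin.const_mul (-k)).deriv]
  ring

theorem cos_mul_sub_midpoint_pos {k t : ℝ} (hk : 0 < k) (hkab : k * (b - a) < Real.pi)
    (ht : t ∈ Icc a b) : 0 < Real.cos (k * (t - (a + b) / 2)) := by
  apply Real.cos_pos_of_mem_Ioo
  constructor
  · linarith [mul_le_mul_of_nonneg_left ht.1 hk.le]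
  · linarith [mul_le_mul_of_nonneg_left ht.2 hk.le]

namespace IsDirichletEigenfunction

theorem add_sq_le_of_mul_sub_lt_pi (h : IsDirichletEigenfunction V lam a b u)
    (hV : ∀ t ∈ Ioo a b, c ≤ V t) {k : ℝ} (hk : 0 < k) (hkab : k * (b - a) < Real.pi) :
    c + k ^ 2 ≤ lam := by
  have hpos := fun t (ht : t ∈ Icc a b) ↦ cos_mul_sub_midpoint_pos hk hkab ht
  refine h.le_of_pos_supersolution (φ := fun t ↦ Real.cos (k * (t - (a + b) / 2)))
    (by fun_prop) (fun t _ ↦ by fun_prop) (fun t _ ↦ ?_) hpos fun t ht ↦ ?_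
  · rw [deriv_cos_mul_sub]
    fun_prop
  · rw [deriv_deriv_cos_mul_sub]
    linarith [mul_le_mul_of_nonneg_right (hV t ht) (hpos t (Ioo_subset_Icc_self ht)).le]

theorem add_pi_div_sq_le (h : IsDirichletEigenfunction V lam a b u)
    (hV : ∀ t ∈ Ioo a b, c ≤ V t) : c + (Real.pi / (b - a)) ^ 2 ≤ lam := by
  have hab : 0 < b - a := sub_pos.mpr h.left_lt_right
  have hlim : Tendsto (fun k ↦ c + k ^ 2) (𝓝[<] (Real.pi / (b - a)))
      (𝓝 (c + (Real.pi / (b - a)) ^ 2)) :=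
    ((continuous_const.add (continuous_pow 2)).tendsto _).mono_left nhdsWithin_le_nhds
  refine le_of_tendsto hlim ?_
  filter_upwards [Ioo_mem_nhdsLT (div_pos Real.pi_pos hab)] with k hk
  exact h.add_sq_le_of_mul_sub_lt_pi hV hk.1 ((lt_div_iff₀ hab).mp hk.2)

end IsDirichletEigenfunction

end Barta

theorem V2_eq_add_div (n : ℕ) (t : ℝ) :
    V2 n t = ((n : ℝ) - 1) ^ 2 / 4 + ((n : ℝ) ^ 2 - 1) / (4 * Real.sinh t ^ 2) := by
  rw [V2]
  ring

theorem V2_antitoneOn_Ioi {n : ℕ} (hn : 1 ≤ n) : AntitoneOn (V2 n) (Ioi 0) := by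
  intro s hs t _ hst
  have hn' : (0 : ℝ) ≤ (n : ℝ) ^ 2 - 1 := sub_nonneg.mpr (one_le_pow₀ (mod_cast hn))
  have hsinh : 0 < Real.sinh s := Real.sinh_pos_iff.mpr hs
  have hle : Real.sinh s ≤ Real.sinh t := Real.sinh_le_sinh.mpr hst
  rw [V2_eq_add_div, V2_eq_add_div]
  gcongr

theorem dirichlet_eigenvalue_V2_lower_bound_general {n : ℕ} (hn : 1 ≤ n) {r lam : ℝ} {u : ℝ → ℝ}
    (h : IsDirichletEigenfunction (V2 n) lam 0 r u) :
    ((n : ℝ) - 1) ^ 2 / 4 + Real.pi ^ 2 / r ^ 2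
      + ((n : ℝ) ^ 2 - 1) / (4 * (Real.sinh r) ^ 2) ≤ lam := by
  have hV : ∀ t ∈ Ioo 0 r, V2 n r ≤ V2 n t := fun t ht ↦
    V2_antitoneOn_Ioi hn ht.1 h.left_lt_right ht.2.le
  calc
    _ = V2 n r + (Real.pi / (r - 0)) ^ 2 := by rw [V2_eq_add_div, sub_zero, div_pow]; ring
    _ ≤ lam := h.add_pi_div_sq_le hV

/-- For `n ≥ 2`, any Dirichlet eigenvalue of `-d²/dt² + V₂` on `[0, r]` satisfies
`λ ≥ (n−1)²/4 + π²/r² + (n²−1)/(4 sinh² r)`. -/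
theorem dirichlet_eigenvalue_V2_lower_bound (n : ℕ) (hn : 2 ≤ n) (r : ℝ) (hr : 0 < r)
    (lam : ℝ) (u : ℝ → ℝ)
    (hne : ∃ t ∈ Set.Icc (0:ℝ) r, u t ≠ 0)
    (hc : ContinuousOn u (Set.Icc 0 r))
    (hd : ∀ t ∈ Set.Ioo (0:ℝ) r, DifferentiableAt ℝ u t)
    (hc' : ContinuousOn (deriv u) (Set.Icc 0 r))
    (hd' : ∀ t ∈ Set.Ioo (0:ℝ) r, DifferentiableAt ℝ (deriv u) t)
    (h0 : u 0 = 0) (hrr : u r = 0)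
    (hode : ∀ t ∈ Set.Ioo (0:ℝ) r, -(deriv (deriv u) t) + V2 n t * u t = lam * u t) :
    ((n : ℝ) - 1) ^ 2 / 4 + Real.pi ^ 2 / r ^ 2
      + ((n : ℝ) ^ 2 - 1) / (4 * (Real.sinh r) ^ 2) ≤ lam :=
  dirichlet_eigenvalue_V2_lower_bound_general (one_le_two.trans hn)
    ⟨hne, hc, hd, hd', h0, hrr, hode⟩
end

section
/- Let n ≥ 2 be an integer, α ≥ 0, r > 0, and let v(t) = sin(πt/r). Then the Rayleigh quotient of v for the potential V_α(t) = ((n−1)/4)·(n−1 + α/sinh²(t)) satisfies (∫₀ʳ (v'(t)² + V_α(t)·v(t)²) dt) / (∫₀ʳ v(t)² dt) ≤ (n−1)²/4 + π²/r² + (n−1)·α·π⁴/(12·r³), with strict inequality when α > 0. Consequently, the first Dirichlet eigenvalue λ₁^α of −d²/dt² + V_α on [0,r] satisfies λ₁^α ≤ (n−1)²/4 + π²/r² + (n−1)·α·π⁴/(12·r³). -/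
/-- The Rayleigh quotient `R_V[u] = (∫₀ʳ (u'² + V u²))/(∫₀ʳ u²)` on `[0, r]`. -/
noncomputable def Rayleigh (V u : ℝ → ℝ) (r : ℝ) : ℝ :=
  (∫ t in (0:ℝ)..r, (deriv u t) ^ 2 + V t * (u t) ^ 2) / (∫ t in (0:ℝ)..r, (u t) ^ 2)

/-- The potential `V_α(t) = ((n−1)/4)·(n−1 + α/sinh² t)`. -/
noncomputable def Valpha (n : ℕ) (α t : ℝ) : ℝ :=
  ((n : ℝ) - 1) / 4 * (((n : ℝ) - 1) + α / (Real.sinh t) ^ 2)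

/-! Expanding `1 / sinh² t = 4 ∑ k exp (-2 k t)` gives `∫₀^∞ t² / sinh² t dt = ζ(2) = π² / 6`, so
`sin² (ω t) ≤ ω² t²` bounds the singular part of the Rayleigh quotient.

It remains to find an eigenvalue below any `B` exceeding the quotient. For `s (s - 1) = b > 0`,
`φ = sinh ^ s` solves `-φ'' + (a + b / sinh²) φ = (a - s²) φ`, and the substitution `u = φ W` turns
the equation at energy `a - s² + ν` into `(φ² W')' = -ν φ² W`, `W 0 = 1`, which is solved by Picard
iteration. If `W` has no zero on `[0, r]` at energy `B`, Jacobi's identity makes every Rayleigh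
quotient at least `B`. Hence `W` vanishes somewhere on `[0, r]`, and lowering `ν` moves its first
zero to `r`, which makes `u` a Dirichlet eigenfunction. -/

open Set MeasureTheory Filter Topology
open scoped Interval

lemma hasSum_one_div_sinh_sq {t : ℝ} (ht : 0 < t) :
    HasSum (fun k : ℕ => 4 * (k * Real.exp (-(2 * t)) ^ k)) (1 / Real.sinh t ^ 2) := by
  have hlt : Real.exp (-(2 * t)) < 1 := Real.exp_lt_one_iff.2 (by linarith)
  have hgeom : HasSum (fun k : ℕ => (k : ℝ) * Real.exp (-(2 * t)) ^ k) _ :=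
    hasSum_coe_mul_geometric_of_norm_lt_one (by rwa [Real.norm_eq_abs, Real.abs_exp])
  have hsinh : 4 * Real.exp (-(2 * t)) * Real.sinh t ^ 2 = (1 - Real.exp (-(2 * t))) ^ 2 := by
    have hsq : Real.exp (-(2 * t)) = Real.exp (-t) ^ 2 := by
      rw [← Real.exp_nat_mul, Nat.cast_ofNat, mul_neg]
    have hinv : Real.exp t * Real.exp (-t) = 1 := by
      rw [← Real.exp_add, add_neg_cancel, Real.exp_zero]
    rw [hsq, Real.sinh_eq]
    linear_combination (Real.exp t * Real.exp (-t) + 1 - 2 * Real.exp (-t) ^ 2) * hinv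
  convert! hgeom.mul_left 4 using 1
  have := (Real.sinh_pos_iff.2 ht).ne'
  have : 1 - Real.exp (-(2 * t)) ≠ 0 := by linarith
  field_simp
  linarith

lemma integral_Ioi_sq_mul_exp_neg_mul {b : ℝ} (hb : 0 < b) :
    ∫ t in Ioi (0 : ℝ), t ^ 2 * Real.exp (-(b * t)) = 2 / b ^ 3 := by
  have hGamma : Real.Gamma 3 = 2 := by simp
  have h := Real.integral_rpow_mul_exp_neg_mul_Ioi (a := (3 : ℕ)) (by norm_num) hb
  rw [Real.rpow_natCast] at h
  norm_num [hGamma] at h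
  rw [h]
  ring

lemma integral_Ioi_sq_div_sinh_sq :
    ∫ t in Ioi (0 : ℝ), t ^ 2 / Real.sinh t ^ 2 = Real.pi ^ 2 / 6 := by
  set F : ℕ → ℝ → ℝ := fun k t => 4 * k * (t ^ 2 * Real.exp (-(2 * k * t))) with hF
  have hint : ∀ k, ∫ t in Ioi (0 : ℝ), F k t = 1 / (k : ℝ) ^ 2 := by
    intro k
    rcases k.eq_zero_or_pos with rfl | hk
    · simp [hF]
    · rw [integral_const_mul, integral_Ioi_sq_mul_exp_neg_mul (by positivity)]
      field_simp
      norm_num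
  have hnorm : ∀ k t, ‖F k t‖ = F k t := fun k t => Real.norm_of_nonneg (by positivity)
  have hintegrable : ∀ k, IntegrableOn (F k) (Ioi 0) := by
    intro k
    rcases k.eq_zero_or_pos with rfl | hk
    · simp [hF]
    · exact .of_integral_ne_zero (by rw [hint]; positivity)
  have hsum : HasSum (fun k : ℕ => 1 / (k : ℝ) ^ 2) (∫ t in Ioi (0 : ℝ), ∑' k, F k t) := by
    simpa only [hint] using hasSum_integral_of_summable_integral_norm hintegrable
      (by simpa only [hnorm, hint] using hasSum_zeta_two.summable)
  rw [← hsum.unique hasSum_zeta_two]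
  refine setIntegral_congr_fun measurableSet_Ioi fun t ht => ?_
  have hexp : ∀ k : ℕ, F k t = t ^ 2 * (4 * (k * Real.exp (-(2 * t)) ^ k)) := by
    intro k
    rw [hF, ← Real.exp_nat_mul, show (k : ℝ) * -(2 * t) = -(2 * k * t) by ring]
    ring
  simp only [hexp]
  rw [((hasSum_one_div_sinh_sq ht).mul_left (t ^ 2)).tsum_eq, mul_one_div]

lemma integrableOn_sq_div_sinh_sq :
    IntegrableOn (fun t : ℝ => t ^ 2 / Real.sinh t ^ 2) (Ioi 0) :=
  .of_integral_ne_zero (by rw [integral_Ioi_sq_div_sinh_sq]; positivity)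

lemma intervalIntegrable_sq_div_sinh_sq {r : ℝ} (hr : 0 ≤ r) :
    IntervalIntegrable (fun t : ℝ => t ^ 2 / Real.sinh t ^ 2) volume 0 r := by
  rw [intervalIntegrable_iff_integrableOn_Ioc_of_le hr]
  exact integrableOn_sq_div_sinh_sq.mono_set Ioc_subset_Ioi_self

lemma integral_sq_div_sinh_sq_le {r : ℝ} (hr : 0 ≤ r) :
    ∫ t in (0 : ℝ)..r, t ^ 2 / Real.sinh t ^ 2 ≤ Real.pi ^ 2 / 6 := by
  rw [← integral_Ioi_sq_div_sinh_sq, intervalIntegral.integral_of_le hr]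
  exact setIntegral_mono_set integrableOn_sq_div_sinh_sq
    (Eventually.of_forall fun t => by positivity) Ioc_subset_Ioi_self.eventuallyLE

lemma intervalIntegrable_sin_sq_div_sinh_sq (ω : ℝ) {r : ℝ} (hr : 0 ≤ r) :
    IntervalIntegrable (fun t => Real.sin (ω * t) ^ 2 / Real.sinh t ^ 2) volume 0 r := by
  refine ((intervalIntegrable_sq_div_sinh_sq hr).const_mul (ω ^ 2)).mono_fun'
    (Measurable.aestronglyMeasurable (by fun_prop)) (Eventually.of_forall fun t => ?_)
  beta_reduce
  rw [Real.norm_of_nonneg (by positivity), ← mul_div_assoc, ← mul_pow]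
  exact div_le_div_of_nonneg_right Real.sin_sq_le_sq (by positivity)

lemma integral_sin_sq_div_sinh_sq_lt {ω r : ℝ} (hω : ω ≠ 0) (hr : 0 < r) :
    ∫ t in (0 : ℝ)..r, Real.sin (ω * t) ^ 2 / Real.sinh t ^ 2 < ω ^ 2 * (Real.pi ^ 2 / 6) := by
  have hsin := intervalIntegrable_sin_sq_div_sinh_sq ω hr.le
  have hsq := (intervalIntegrable_sq_div_sinh_sq hr.le).const_mul (ω ^ 2)
  have hpos : 0 < ∫ t in (0 : ℝ)..r,
      (ω ^ 2 * (t ^ 2 / Real.sinh t ^ 2) - Real.sin (ω * t) ^ 2 / Real.sinh t ^ 2) := by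
    refine intervalIntegral.intervalIntegral_pos_of_pos_on (hsq.sub hsin) (fun t ht => ?_) hr
    have hsinh : 0 < Real.sinh t := Real.sinh_pos_iff.2 ht.1
    rw [sub_pos, ← mul_div_assoc, ← mul_pow]
    exact div_lt_div_of_pos_right (Real.sin_sq_lt_sq (mul_ne_zero hω ht.1.ne')) (by positivity)
  rw [intervalIntegral.integral_sub hsq hsin, intervalIntegral.integral_const_mul, sub_pos] at hpos
  exact hpos.trans_le (by gcongr; exact integral_sq_div_sinh_sq_le hr.le)

lemma hasDerivAt_sin_const_mul (ω t : ℝ) :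
    HasDerivAt (fun t => Real.sin (ω * t)) (ω * Real.cos (ω * t)) t := by
  simpa [mul_comm] using ((hasDerivAt_id t).const_mul ω).sin

lemma integral_sin_pi_div_mul_sq {r : ℝ} (hr : r ≠ 0) :
    ∫ t in (0 : ℝ)..r, Real.sin (Real.pi / r * t) ^ 2 = r / 2 := by
  rw [intervalIntegral.integral_comp_mul_left (fun x => Real.sin x ^ 2) (by positivity),
    div_mul_cancel₀ _ hr, mul_zero, integral_sin_sq, smul_eq_mul]
  simp only [Real.sin_zero, Real.sin_pi, zero_mul, sub_self, zero_add, sub_zero]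
  field_simp

lemma integral_cos_pi_div_mul_sq {r : ℝ} (hr : r ≠ 0) :
    ∫ t in (0 : ℝ)..r, Real.cos (Real.pi / r * t) ^ 2 = r / 2 := by
  rw [intervalIntegral.integral_comp_mul_left (fun x => Real.cos x ^ 2) (by positivity),
    div_mul_cancel₀ _ hr, mul_zero, integral_cos_sq, smul_eq_mul]
  simp only [Real.sin_zero, Real.sin_pi, mul_zero, sub_self, zero_add, sub_zero]
  field_simp

lemma rayleigh_sin {V : ℝ → ℝ} {r : ℝ} (hr : r ≠ 0)
    (hV : IntervalIntegrable (fun t => V t * Real.sin (Real.pi / r * t) ^ 2) volume 0 r) :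
    Rayleigh V (fun t => Real.sin (Real.pi / r * t)) r =
      Real.pi ^ 2 / r ^ 2 + 2 / r * ∫ t in (0 : ℝ)..r, V t * Real.sin (Real.pi / r * t) ^ 2 := by
  have hcos : IntervalIntegrable (fun t => (Real.pi / r) ^ 2 * Real.cos (Real.pi / r * t) ^ 2)
      volume 0 r := Continuous.intervalIntegrable (by fun_prop) _ _
  simp only [Rayleigh, (hasDerivAt_sin_const_mul _ _).deriv, mul_pow]
  rw [intervalIntegral.integral_add hcos hV, intervalIntegral.integral_const_mul,
    integral_cos_pi_div_mul_sq hr, integral_sin_pi_div_mul_sq hr]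
  field_simp

/-- The Pöschl–Teller type potential `a + b / sinh² t`; `Valpha n α` is the case
`a = (n - 1)² / 4`, `b = (n - 1) α / 4`. At `t = 0` division by zero makes its value `a`. -/
noncomputable def sinhPotential (a b t : ℝ) : ℝ :=
  a + b / Real.sinh t ^ 2

lemma Valpha_eq_sinhPotential (n : ℕ) (α : ℝ) :
    Valpha n α = sinhPotential (((n : ℝ) - 1) ^ 2 / 4) (((n : ℝ) - 1) * α / 4) := by
  funext t
  rw [Valpha, sinhPotential]
  ring

lemma sinhPotential_mul_sin_sq (a b ω t : ℝ) :
    sinhPotential a b t * Real.sin (ω * t) ^ 2 =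
      a * Real.sin (ω * t) ^ 2 + b * (Real.sin (ω * t) ^ 2 / Real.sinh t ^ 2) := by
  rw [sinhPotential]
  ring

lemma intervalIntegrable_sinhPotential_mul_sin_sq (a b ω : ℝ) {r : ℝ} (hr : 0 ≤ r) :
    IntervalIntegrable (fun t => sinhPotential a b t * Real.sin (ω * t) ^ 2) volume 0 r := by
  simp only [sinhPotential_mul_sin_sq]
  exact (Continuous.intervalIntegrable (by fun_prop) _ _).add
    ((intervalIntegrable_sin_sq_div_sinh_sq ω hr).const_mul b)

lemma rayleigh_sinhPotential_sin (a b : ℝ) {r : ℝ} (hr : 0 < r) :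
    Rayleigh (sinhPotential a b) (fun t => Real.sin (Real.pi / r * t)) r =
      a + Real.pi ^ 2 / r ^ 2 +
        2 * b / r * ∫ t in (0 : ℝ)..r, Real.sin (Real.pi / r * t) ^ 2 / Real.sinh t ^ 2 := by
  rw [rayleigh_sin hr.ne' (intervalIntegrable_sinhPotential_mul_sin_sq a b _ hr.le)]
  simp only [sinhPotential_mul_sin_sq]
  rw [intervalIntegral.integral_add (Continuous.intervalIntegrable (by fun_prop) _ _)
      ((intervalIntegrable_sin_sq_div_sinh_sq _ hr.le).const_mul b),
    intervalIntegral.integral_const_mul, intervalIntegral.integral_const_mul,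
    integral_sin_pi_div_mul_sq hr.ne']
  field_simp
  ring

lemma rayleigh_sinhPotential_sin_lt (a : ℝ) {b r : ℝ} (hb : 0 < b) (hr : 0 < r) :
    Rayleigh (sinhPotential a b) (fun t => Real.sin (Real.pi / r * t)) r <
      a + Real.pi ^ 2 / r ^ 2 + b * Real.pi ^ 4 / (3 * r ^ 3) := by
  have hint := integral_sin_sq_div_sinh_sq_lt (ω := Real.pi / r) (by positivity) hr
  rw [rayleigh_sinhPotential_sin a b hr]
  calc _ < a + Real.pi ^ 2 / r ^ 2 + 2 * b / r * ((Real.pi / r) ^ 2 * (Real.pi ^ 2 / 6)) := by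
        gcongr
    _ = _ := by field_simp; ring

/-- Jacobi's form of Picone's inequality. Its integrand exceeds the derivative of
`v² u' / u` by the square `(v' - v u' / u)²`. -/
lemma integral_deriv_sq_add_mul_sq_nonneg {q u v : ℝ → ℝ} {a b : ℝ} (hab : a ≤ b)
    (hu : ∀ t ∈ Ioo a b, u t ≠ 0) (hu' : ∀ t ∈ Ioo a b, DifferentiableAt ℝ u t)
    (hu'' : ∀ t ∈ Ioo a b, HasDerivAt (deriv u) (q t * u t) t)
    (hv : ∀ t ∈ Ioo a b, DifferentiableAt ℝ v t) (hva : v a = 0) (hvb : v b = 0)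
    (hcont : ContinuousOn (fun t => v t ^ 2 * logDeriv u t) (Icc a b))
    (hint : IntervalIntegrable (fun t => deriv v t ^ 2 + q t * v t ^ 2) volume a b) :
    0 ≤ ∫ t in a..b, (deriv v t ^ 2 + q t * v t ^ 2) := by
  have hderiv : ∀ t ∈ Ioo a b, HasDerivAt (fun t => v t ^ 2 * logDeriv u t)
      (deriv v t ^ 2 + q t * v t ^ 2 - (deriv v t - v t * logDeriv u t) ^ 2) t := by
    intro t ht
    convert! ((hv t ht).hasDerivAt.pow 2).mul ((hu'' t ht).div (hu' t ht).hasDerivAt (hu t ht))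
      using 1
    have := hu t ht
    simp only [logDeriv_apply, Pi.div_apply, Pi.pow_apply]
    field_simp
    ring
  have hle := intervalIntegral.sub_le_integral_of_hasDeriv_right_of_le hab hcont
    (fun t ht => (hderiv t ht).hasDerivWithinAt)
    ((integrableOn_Icc_iff_integrableOn_Ioc).2
      ((intervalIntegrable_iff_integrableOn_Ioc_of_le hab).1 hint))
    (fun t _ => sub_le_self _ (sq_nonneg _))
  simpa [hva, hvb] using hle

/-- The weights `p` allowed in the singular Sturm–Liouville problem `(p W')' = -ν p W`,
`W 0 = 1`, extended by zero to the left of the singular point `0`. -/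
structure IsSingularWeight (p : ℝ → ℝ) : Prop where
  continuous : Continuous p
  eq_zero : ∀ t ≤ 0, p t = 0
  pos : ∀ t > 0, 0 < p t
  monotone : Monotone p

/-- The derivative of the solution `g` of `(p g')' = p f` that vanishes to first order at `0`. For a
singular weight, division by zero makes it vanish on the left half-line. -/
noncomputable def weightedMean (p f : ℝ → ℝ) (t : ℝ) : ℝ :=
  (∫ y in (0 : ℝ)..t, p y * f y) / p t

/-- The solution operator `f ↦ g` of `(p g')' = p f`, `g 0 = g' 0 = 0`. -/
noncomputable def volterra (p f : ℝ → ℝ) (t : ℝ) : ℝ :=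
  ∫ x in (0 : ℝ)..t, weightedMean p f x

/-- The solution of `(p W')' = -ν p W`, `W 0 = 1`, given by the Neumann series of
`W = 1 - ν * volterra p W`. -/
noncomputable def regularSolution (p : ℝ → ℝ) (ν t : ℝ) : ℝ :=
  ∑' m : ℕ, (-ν) ^ m * (volterra p)^[m] 1 t

lemma weightedMean_const_mul (p f : ℝ → ℝ) (c t : ℝ) :
    weightedMean p (fun y => c * f y) t = c * weightedMean p f t := by
  simp only [weightedMean, mul_left_comm _ c, intervalIntegral.integral_const_mul, mul_div_assoc]

lemma volterra_const_mul (p f : ℝ → ℝ) (c t : ℝ) :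
    volterra p (fun y => c * f y) t = c * volterra p f t := by
  simp only [volterra, weightedMean_const_mul, intervalIntegral.integral_const_mul]

namespace IsSingularWeight

variable {p f : ℝ → ℝ} (hp : IsSingularWeight p)
include hp

lemma nonneg (t : ℝ) : 0 ≤ p t :=
  (le_or_gt t 0).elim (fun h => (hp.eq_zero t h).ge) fun h => (hp.pos t h).le

lemma weightedMean_of_nonpos (f : ℝ → ℝ) {t : ℝ} (ht : t ≤ 0) : weightedMean p f t = 0 := by
  rw [weightedMean, hp.eq_zero t ht, div_zero]

lemma volterra_of_nonpos (f : ℝ → ℝ) {t : ℝ} (ht : t ≤ 0) : volterra p f t = 0 := by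
  rw [volterra, intervalIntegral.integral_congr (g := fun _ => 0), intervalIntegral.integral_zero]
  intro x hx
  rw [uIcc_of_ge ht] at hx
  exact hp.weightedMean_of_nonpos f hx.2

lemma weightedMean_nonneg {t : ℝ} (ht : 0 ≤ t) (hf : ∀ y ∈ Icc 0 t, 0 ≤ f y) :
    0 ≤ weightedMean p f t :=
  div_nonneg (intervalIntegral.integral_nonneg ht fun y hy => mul_nonneg (hp.nonneg y) (hf y hy))
    (hp.nonneg t)

lemma abs_weightedMean_le {t M : ℝ} (ht : 0 ≤ t) (hf : ∀ y ∈ Icc 0 t, |f y| ≤ M) :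
    |weightedMean p f t| ≤ t * M := by
  rcases ht.eq_or_lt with rfl | hpos
  · simp [hp.weightedMean_of_nonpos f le_rfl]
  have hbound : ∀ y ∈ Ι 0 t, ‖p y * f y‖ ≤ p t * M := by
    intro y hy
    rw [uIoc_of_le ht] at hy
    rw [norm_mul, Real.norm_of_nonneg (hp.nonneg y)]
    exact mul_le_mul (hp.monotone hy.2) (hf y (Ioc_subset_Icc_self hy)) (norm_nonneg _)
      (hp.nonneg t)
  have hint := intervalIntegral.norm_integral_le_of_norm_le_const hbound
  rw [Real.norm_eq_abs, sub_zero, abs_of_pos hpos] at hint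
  rw [weightedMean, abs_div, abs_of_pos (hp.pos t hpos), div_le_iff₀ (hp.pos t hpos)]
  linarith

lemma continuousAt_weightedMean_zero (hf : Continuous f) :
    ContinuousAt (weightedMean p f) 0 := by
  obtain ⟨M, hM⟩ := (isCompact_Icc (a := (0 : ℝ)) (b := 1)).exists_bound_of_continuousOn
    hf.continuousOn
  have hlim : Tendsto (fun t : ℝ => |t| * M) (𝓝 0) (𝓝 0) :=
    Continuous.tendsto' (by fun_prop) _ _ (by simp)
  rw [ContinuousAt, hp.weightedMean_of_nonpos f le_rfl]
  refine squeeze_zero_norm' ?_ hlim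
  filter_upwards [Iio_mem_nhds one_pos] with t ht1
  rcases le_or_gt t 0 with ht | ht
  · rw [hp.weightedMean_of_nonpos f ht, norm_zero]
    exact mul_nonneg (abs_nonneg t) ((norm_nonneg _).trans (hM 0 (by simp)))
  · rw [abs_of_pos ht]
    exact hp.abs_weightedMean_le ht.le fun y hy => hM y ⟨hy.1, hy.2.trans (le_of_lt ht1)⟩

lemma continuous_weightedMean (hf : Continuous f) : Continuous (weightedMean p f) := by
  refine continuous_iff_continuousAt.2 fun t => ?_
  rcases lt_trichotomy t 0 with ht | rfl | ht
  · refine continuousAt_const.congr (f := fun _ => (0 : ℝ)) ?_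
    filter_upwards [Iio_mem_nhds ht] with x hx
    exact (hp.weightedMean_of_nonpos f (le_of_lt hx)).symm
  · exact hp.continuousAt_weightedMean_zero hf
  · have hprim : ContinuousAt (fun t => ∫ y in (0 : ℝ)..t, p y * f y) t :=
      ((hp.continuous.mul hf).integral_hasStrictDerivAt 0 t).hasDerivAt.continuousAt
    exact hprim.div hp.continuous.continuousAt (hp.pos t ht).ne'

lemma hasDerivAt_weightedMean {t p' : ℝ} (hf : Continuous f) (ht : 0 < t)
    (hp' : HasDerivAt p p' t) :
    HasDerivAt (weightedMean p f) (f t - p' / p t * weightedMean p f t) t := by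
  have hpt := (hp.pos t ht).ne'
  have hprim : HasDerivAt (fun t => ∫ y in (0 : ℝ)..t, p y * f y) (p t * f t) t :=
    ((hp.continuous.mul hf).integral_hasStrictDerivAt 0 t).hasDerivAt
  convert! hprim.div hp' hpt using 1
  rw [weightedMean]
  field_simp

lemma hasDerivAt_volterra (hf : Continuous f) (t : ℝ) :
    HasDerivAt (volterra p f) (weightedMean p f t) t :=
  ((hp.continuous_weightedMean hf).integral_hasStrictDerivAt 0 t).hasDerivAt

lemma continuous_volterra (hf : Continuous f) : Continuous (volterra p f) :=
  continuous_iff_continuousAt.2 fun t => (hp.hasDerivAt_volterra hf t).continuousAt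

lemma abs_volterra_le {K : ℝ} {m : ℕ} (hf : ∀ y, |f y| ≤ K * (y ^ 2) ^ m) (t : ℝ) :
    |volterra p f t| ≤ K / (m + 1) * (t ^ 2) ^ (m + 1) := by
  have hK : 0 ≤ K := by simpa using (abs_nonneg _).trans (hf 1)
  rcases le_or_gt t 0 with ht | ht
  · rw [hp.volterra_of_nonpos f ht, abs_zero]
    positivity
  have hmean : ∀ x ∈ Ioc 0 t, ‖weightedMean p f x‖ ≤ K * x ^ (2 * m + 1) := by
    intro x hx
    refine (hp.abs_weightedMean_le hx.1.le (M := K * (x ^ 2) ^ m) fun y hy => ?_).trans_eq ?_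
    · have := hy.1
      have := hy.2
      exact (hf y).trans (by gcongr)
    · rw [← pow_mul]
      ring
  calc |volterra p f t| ≤ ∫ x in (0 : ℝ)..t, K * x ^ (2 * m + 1) :=
        intervalIntegral.norm_integral_le_of_norm_le ht.le (Eventually.of_forall hmean)
          (Continuous.intervalIntegrable (by fun_prop) _ _)
    _ = K / (2 * (m + 1)) * (t ^ 2) ^ (m + 1) := by
        rw [intervalIntegral.integral_const_mul, integral_pow, ← pow_mul]
        push_cast
        field_simp
        ring
    _ ≤ K / (m + 1) * (t ^ 2) ^ (m + 1) := by
        gcongr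
        linarith

lemma continuous_iterate_volterra (m : ℕ) : Continuous ((volterra p)^[m] 1) := by
  induction m with
  | zero => exact continuous_one
  | succ m ih =>
    rw [Function.iterate_succ_apply']
    exact hp.continuous_volterra ih

lemma abs_iterate_volterra_le (m : ℕ) (t : ℝ) :
    |(volterra p)^[m] 1 t| ≤ 1 / m.factorial * (t ^ 2) ^ m := by
  induction m generalizing t with
  | zero => simp
  | succ m ih =>
    rw [Function.iterate_succ_apply']
    refine (hp.abs_volterra_le ih t).trans_eq ?_
    rw [Nat.factorial_succ]
    push_cast
    field_simp

lemma abs_pow_mul_iterate_volterra_le {ν N t R : ℝ} (hν : |ν| ≤ N) (ht : |t| ≤ R) (m : ℕ) :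
    |(-ν) ^ m * (volterra p)^[m] 1 t| ≤ (N * R ^ 2) ^ m / m.factorial := by
  have hN : 0 ≤ N := (abs_nonneg ν).trans hν
  calc |(-ν) ^ m * (volterra p)^[m] 1 t| = |ν| ^ m * |(volterra p)^[m] 1 t| := by
        rw [abs_mul, abs_pow, abs_neg]
    _ ≤ N ^ m * (1 / m.factorial * (|t| ^ 2) ^ m) := by
        rw [sq_abs]
        gcongr
        exact hp.abs_iterate_volterra_le m t
    _ ≤ N ^ m * (1 / m.factorial * (R ^ 2) ^ m) := by gcongr
    _ = (N * R ^ 2) ^ m / m.factorial := by ring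

lemma summable_regularSolution (ν t : ℝ) :
    Summable fun m => (-ν) ^ m * (volterra p)^[m] 1 t :=
  .of_norm_bounded (Real.summable_pow_div_factorial _)
    (hp.abs_pow_mul_iterate_volterra_le le_rfl le_rfl)

lemma continuous_uncurry_regularSolution :
    Continuous (Function.uncurry (regularSolution p)) := by
  refine continuous_iff_continuousAt.2 fun z₀ => ?_
  refine ContinuousOn.continuousAt ?_ (Metric.ball_mem_nhds z₀ one_pos)
  refine continuousOn_tsum (fun m => ?_)
    (Real.summable_pow_div_factorial ((‖z₀‖ + 1) * (‖z₀‖ + 1) ^ 2)) fun m z hz => ?_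
  · have := hp.continuous_iterate_volterra m
    fun_prop
  · have hz' : ‖z‖ ≤ ‖z₀‖ + 1 := norm_le_norm_add_const_of_dist_le hz.le
    exact hp.abs_pow_mul_iterate_volterra_le ((norm_fst_le z).trans hz')
      ((norm_snd_le z).trans hz') m

lemma continuous_regularSolution (ν : ℝ) : Continuous (regularSolution p ν) :=
  hp.continuous_uncurry_regularSolution.comp (Continuous.prodMk_right ν)

lemma hasSum_weightedMean {F : ℕ → ℝ → ℝ} {B : ℕ → ℝ} {t : ℝ} (hF : ∀ m, Continuous (F m))
    (hB : Summable B) (hFB : ∀ m, ∀ y ∈ uIcc 0 t, |F m y| ≤ B m) :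
    HasSum (fun m => weightedMean p (F m) t) (weightedMean p (fun y => ∑' m, F m y) t) := by
  have hint : HasSum (fun m => ∫ y in (0 : ℝ)..t, p y * F m y)
      (∫ y in (0 : ℝ)..t, p y * ∑' m, F m y) := by
    refine intervalIntegral.hasSum_integral_of_dominated_convergence (fun m y => p y * B m)
      (fun m => (hp.continuous.mul (hF m)).aestronglyMeasurable)
      (fun m => .of_forall fun y hy => ?_) (.of_forall fun y _ => hB.mul_left _) ?_
      (.of_forall fun y hy => ?_)
    · rw [norm_mul, Real.norm_of_nonneg (hp.nonneg y)]
      exact mul_le_mul_of_nonneg_left (hFB m y (uIoc_subset_uIcc hy)) (hp.nonneg y)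
    · simp only [tsum_mul_left]
      exact (hp.continuous.mul continuous_const).intervalIntegrable _ _
    · have hsummable : Summable fun m => F m y :=
        .of_norm_bounded hB fun m => hFB m y (uIoc_subset_uIcc hy)
      exact hsummable.hasSum.mul_left (p y)
  exact hint.div_const (p t)

lemma hasSum_volterra {F : ℕ → ℝ → ℝ} {B : ℕ → ℝ} {t : ℝ} (hF : ∀ m, Continuous (F m))
    (hB : Summable B) (hFB : ∀ m, ∀ y ∈ uIcc 0 t, |F m y| ≤ B m) :
    HasSum (fun m => volterra p (F m) t) (volterra p (fun y => ∑' m, F m y) t) := by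
  have hsub : ∀ x ∈ Ι 0 t, uIcc 0 x ⊆ uIcc 0 t := fun x hx =>
    uIcc_subset_uIcc left_mem_uIcc (uIoc_subset_uIcc hx)
  refine intervalIntegral.hasSum_integral_of_dominated_convergence (fun m _ => |t| * B m)
    (fun m => (hp.continuous_weightedMean (hF m)).aestronglyMeasurable)
    (fun m => .of_forall fun x hx => ?_) (.of_forall fun _ _ => hB.mul_left _) (by simp)
    (.of_forall fun x hx => hp.hasSum_weightedMean hF hB fun m y hy => hFB m y (hsub x hx hy))
  have hBm : 0 ≤ B m := (abs_nonneg _).trans (hFB m 0 left_mem_uIcc)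
  rcases le_or_gt x 0 with hx0 | hx0
  · rw [hp.weightedMean_of_nonpos _ hx0, norm_zero]
    positivity
  · have hxt : x ≤ |t| := by
      rcases mem_uIoc.1 hx with h | h
      · exact h.2.trans (le_abs_self t)
      · linarith [abs_nonneg t]
    calc |weightedMean p (F m) x| ≤ x * B m := hp.abs_weightedMean_le hx0.le fun y hy =>
          hFB m y (hsub x hx (Icc_subset_uIcc hy))
      _ ≤ |t| * B m := by gcongr

lemma regularSolution_eq (ν t : ℝ) :
    regularSolution p ν t = 1 - ν * volterra p (regularSolution p ν) t := by
  have habs : ∀ y ∈ uIcc 0 t, |y| ≤ |t| := fun y hy => by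
    simpa using abs_sub_left_of_mem_uIcc hy
  have hsum := hp.hasSum_volterra (F := fun m y => (-ν) ^ m * (volterra p)^[m] 1 y)
    (fun m => (hp.continuous_iterate_volterra m).const_mul _)
    (Real.summable_pow_div_factorial _)
    (fun m y hy => hp.abs_pow_mul_iterate_volterra_le le_rfl (habs y hy) m)
  have hterm : ∀ m, (-ν) ^ (m + 1) * (volterra p)^[m + 1] 1 t =
      -ν * volterra p (fun y => (-ν) ^ m * (volterra p)^[m] 1 y) t := by
    intro m
    rw [volterra_const_mul, Function.iterate_succ_apply', pow_succ']
    ring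
  rw [regularSolution, (hp.summable_regularSolution ν t).tsum_eq_zero_add]
  simp only [hterm, tsum_mul_left, hsum.tsum_eq]
  change _ = 1 - ν * volterra p (fun y => ∑' m, (-ν) ^ m * (volterra p)^[m] 1 y) t
  rw [pow_zero, one_mul, Function.iterate_zero, id, Pi.one_apply, neg_mul, sub_eq_add_neg]

lemma hasDerivAt_regularSolution (ν t : ℝ) :
    HasDerivAt (regularSolution p ν) (-ν * weightedMean p (regularSolution p ν) t) t := by
  have h := ((hp.hasDerivAt_volterra (hp.continuous_regularSolution ν) t).const_mul ν).const_sub 1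
  rw [neg_mul]
  exact h.congr_of_eventuallyEq (.of_forall (hp.regularSolution_eq ν))

lemma regularSolution_apply_zero (ν : ℝ) : regularSolution p ν 0 = 1 := by
  rw [hp.regularSolution_eq, hp.volterra_of_nonpos _ le_rfl, mul_zero, sub_zero]

lemma antitoneOn_regularSolution {ν r : ℝ} (hν : 0 ≤ ν)
    (hW : ∀ t ∈ Icc 0 r, 0 ≤ regularSolution p ν t) :
    AntitoneOn (regularSolution p ν) (Icc 0 r) := by
  refine antitoneOn_of_hasDerivWithinAt_nonpos (convex_Icc 0 r)
    (hp.continuous_regularSolution ν).continuousOn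
    (fun t _ => (hp.hasDerivAt_regularSolution ν t).hasDerivWithinAt) fun t ht => ?_
  have ht' := interior_subset ht
  rw [neg_mul, neg_nonpos]
  exact mul_nonneg hν (hp.weightedMean_nonneg ht'.1 fun y hy => hW y ⟨hy.1, hy.2.trans ht'.2⟩)

/-- Shooting in `ν`: the minimum of `regularSolution p ν` over `[0, r]` depends continuously on `ν`
and equals `1` at `ν = 0`. Where it first vanishes, monotonicity places the zero at `r`. -/
lemma exists_regularSolution_eq_zero {N r t₀ : ℝ} (hN : 0 ≤ N) (ht₀ : t₀ ∈ Icc 0 r)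
    (hW : regularSolution p N t₀ ≤ 0) : ∃ ν ≤ N, regularSolution p ν r = 0 := by
  have hr : (0 : ℝ) ≤ r := ht₀.1.trans ht₀.2
  have hne : (Icc 0 r).Nonempty := ⟨t₀, ht₀⟩
  have hbdd : ∀ ν, BddBelow (regularSolution p ν '' Icc 0 r) := fun ν =>
    isCompact_Icc.bddBelow_image (hp.continuous_regularSolution ν).continuousOn
  have hmin_zero : sInf (regularSolution p 0 '' Icc 0 r) = 1 := by
    have hone : regularSolution p 0 = fun _ => 1 := funext fun t => by
      rw [hp.regularSolution_eq, zero_mul, sub_zero]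
    rw [hone, hne.image_const, csInf_singleton]
  have hmin_N : sInf (regularSolution p N '' Icc 0 r) ≤ 0 :=
    (csInf_le (hbdd N) (mem_image_of_mem _ ht₀)).trans hW
  obtain ⟨ν, ⟨hν, hνN⟩, hmin⟩ := intermediate_value_Icc' hN
    (isCompact_Icc.continuous_sInf hp.continuous_uncurry_regularSolution).continuousOn
    ⟨hmin_N, hmin_zero ▸ zero_le_one⟩
  have hnonneg : ∀ t ∈ Icc 0 r, 0 ≤ regularSolution p ν t := fun t ht =>
    hmin.ge.trans (csInf_le (hbdd ν) (mem_image_of_mem _ ht))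
  obtain ⟨t₁, ht₁, hzero⟩ := isCompact_Icc.exists_sInf_image_eq hne
    (hp.continuous_regularSolution ν).continuousOn
  refine ⟨ν, hνN, le_antisymm ?_ (hnonneg r ⟨hr, le_rfl⟩)⟩
  calc regularSolution p ν r ≤ regularSolution p ν t₁ :=
        hp.antitoneOn_regularSolution hν hnonneg ht₁ ⟨hr, le_rfl⟩ ht₁.2
    _ = 0 := hzero.symm.trans hmin

end IsSingularWeight

/-- A solution `φ` of `-φ'' + V φ = c φ` on the positive half-line which is zero at `0` and
increasing, extended by zero to the left. Writing `u = φ W` turns `-u'' + V u = (c + ν) u` into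
`(φ² W')' = -ν φ² W`, which has no singular potential. -/
structure IsReferenceSolution (V : ℝ → ℝ) (c : ℝ) (φ : ℝ → ℝ) : Prop where
  contDiff : ContDiff ℝ 1 φ
  eq_zero : ∀ t ≤ 0, φ t = 0
  pos : ∀ t > 0, 0 < φ t
  monotone : Monotone φ
  hasDerivAt_deriv : ∀ t > 0, HasDerivAt (deriv φ) ((V t - c) * φ t) t

/-- The functions `v` on `[0, r]` for which Jacobi's argument bounds the Rayleigh quotient from
below, given a reference solution `φ`. -/
structure IsTestFunction (V φ : ℝ → ℝ) (r : ℝ) (v : ℝ → ℝ) : Prop where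
  contDiff : ContDiff ℝ 1 v
  apply_zero : v 0 = 0
  apply_right : v r = 0
  intervalIntegrable : IntervalIntegrable (fun t => V t * v t ^ 2) volume 0 r
  integral_sq_pos : 0 < ∫ t in (0 : ℝ)..r, v t ^ 2
  continuousOn_sq_mul_logDeriv : ContinuousOn (fun t => v t ^ 2 * logDeriv φ t) (Icc 0 r)

/-- The solution of `-u'' + V u = (c + ν) u` that behaves like the reference solution `φ` of
`-φ'' + V φ = c φ` at `0`. -/
noncomputable def shootingSolution (φ : ℝ → ℝ) (ν t : ℝ) : ℝ :=
  φ t * regularSolution (fun y => φ y ^ 2) ν t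

namespace IsReferenceSolution

variable {V φ v : ℝ → ℝ} {c : ℝ} (hφ : IsReferenceSolution V c φ)
include hφ

lemma hasDerivAt (t : ℝ) : HasDerivAt φ (deriv φ t) t :=
  (hφ.contDiff.differentiable one_ne_zero t).hasDerivAt

lemma nonneg (t : ℝ) : 0 ≤ φ t :=
  (le_or_gt t 0).elim (fun h => (hφ.eq_zero t h).ge) fun h => (hφ.pos t h).le

lemma isSingularWeight_sq : IsSingularWeight (fun t => φ t ^ 2) where
  continuous := hφ.contDiff.continuous.pow 2
  eq_zero t ht := by rw [hφ.eq_zero t ht, zero_pow two_ne_zero]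
  pos t ht := pow_pos (hφ.pos t ht) 2
  monotone s t hst := pow_le_pow_left₀ (hφ.nonneg s) (hφ.monotone hst) 2

lemma hasDerivAt_shootingSolution (ν t : ℝ) :
    HasDerivAt (shootingSolution φ ν)
      (deriv φ t * regularSolution (fun y => φ y ^ 2) ν t +
        φ t * (-ν * weightedMean (fun y => φ y ^ 2) (regularSolution (fun y => φ y ^ 2) ν) t)) t :=
  (hφ.hasDerivAt t).mul (hφ.isSingularWeight_sq.hasDerivAt_regularSolution ν t)

lemma continuous_shootingSolution (ν : ℝ) : Continuous (shootingSolution φ ν) :=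
  continuous_iff_continuousAt.2 fun t => (hφ.hasDerivAt_shootingSolution ν t).continuousAt

lemma deriv_shootingSolution (ν : ℝ) :
    deriv (shootingSolution φ ν) = fun t => deriv φ t * regularSolution (fun y => φ y ^ 2) ν t +
      φ t * (-ν * weightedMean (fun y => φ y ^ 2) (regularSolution (fun y => φ y ^ 2) ν) t) :=
  funext fun t => (hφ.hasDerivAt_shootingSolution ν t).deriv

lemma continuous_deriv_shootingSolution (ν : ℝ) : Continuous (deriv (shootingSolution φ ν)) := by
  have hW := hφ.isSingularWeight_sq.continuous_regularSolution ν
  have hmean := hφ.isSingularWeight_sq.continuous_weightedMean hW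
  have hφ' := hφ.contDiff.continuous_deriv_one
  have hφc := hφ.contDiff.continuous
  rw [hφ.deriv_shootingSolution]
  fun_prop

lemma hasDerivAt_deriv_shootingSolution (ν : ℝ) {t : ℝ} (ht : 0 < t) :
    HasDerivAt (deriv (shootingSolution φ ν)) ((V t - (c + ν)) * shootingSolution φ ν t) t := by
  have hp := hφ.isSingularWeight_sq
  have hmean := hp.hasDerivAt_weightedMean (hp.continuous_regularSolution ν) ht
    ((hφ.hasDerivAt t).pow 2)
  rw [hφ.deriv_shootingSolution]
  convert! ((hφ.hasDerivAt_deriv t ht).mul (hp.hasDerivAt_regularSolution ν t)).add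
    ((hφ.hasDerivAt t).mul (hmean.const_mul (-ν))) using 1
  have := (hφ.pos t ht).ne'
  rw [shootingSolution]
  field_simp
  ring

lemma isDirichletEigenvalue_of_regularSolution_eq_zero {ν r : ℝ} (hr : 0 < r)
    (hzero : regularSolution (fun y => φ y ^ 2) ν r = 0) : IsDirichletEigenvalue V r (c + ν) := by
  have hp := hφ.isSingularWeight_sq
  have hne : ∀ᶠ t in 𝓝[>] 0, regularSolution (fun y => φ y ^ 2) ν t ≠ 0 :=
    ((hp.continuous_regularSolution ν).continuousAt.eventually_ne
      (by rw [hp.regularSolution_apply_zero]; exact one_ne_zero)).filter_mono nhdsWithin_le_nhds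
  obtain ⟨t, hWt, ht⟩ := (hne.and (Ioo_mem_nhdsGT hr)).exists
  refine ⟨shootingSolution φ ν, ⟨t, Ioo_subset_Icc_self ht, mul_ne_zero (hφ.pos t ht.1).ne' hWt⟩,
    (hφ.continuous_shootingSolution ν).continuousOn,
    fun s _ => (hφ.hasDerivAt_shootingSolution ν s).differentiableAt,
    (hφ.continuous_deriv_shootingSolution ν).continuousOn,
    fun s hs => (hφ.hasDerivAt_deriv_shootingSolution ν hs.1).differentiableAt, ?_, ?_,
    fun s hs => ?_⟩
  · rw [shootingSolution, hφ.eq_zero 0 le_rfl, zero_mul]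
  · rw [shootingSolution, hzero, mul_zero]
  · rw [(hφ.hasDerivAt_deriv_shootingSolution ν hs.1).deriv]
    ring

lemma continuousOn_sq_mul_logDeriv_shootingSolution {ν r : ℝ} (hv : IsTestFunction V φ r v)
    (hW : ∀ t ∈ Icc 0 r, regularSolution (fun y => φ y ^ 2) ν t ≠ 0) :
    ContinuousOn (fun t => v t ^ 2 * logDeriv (shootingSolution φ ν) t) (Icc 0 r) := by
  have hp := hφ.isSingularWeight_sq
  have hWc := hp.continuous_regularSolution ν
  have hW' : ContinuousOn (logDeriv (regularSolution (fun y => φ y ^ 2) ν)) (Icc 0 r) := by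
    have hderiv : deriv (regularSolution (fun y => φ y ^ 2) ν) = _ :=
      funext fun t => (hp.hasDerivAt_regularSolution ν t).deriv
    refine ContinuousOn.div ?_ hWc.continuousOn hW
    rw [hderiv]
    exact ((hp.continuous_weightedMean hWc).const_mul (-ν)).continuousOn
  refine (hv.continuousOn_sq_mul_logDeriv.add
    ((hv.contDiff.continuous.pow 2).continuousOn.mul hW')).congr fun t ht => ?_
  rcases ht.1.eq_or_lt with rfl | hpos
  · simp [hv.apply_zero]
  · have hlog : logDeriv (shootingSolution φ ν) t =
        logDeriv φ t + logDeriv (regularSolution (fun y => φ y ^ 2) ν) t :=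
      logDeriv_mul t (hφ.pos t hpos).ne' (hW t ht) (hφ.hasDerivAt t).differentiableAt
        (hp.hasDerivAt_regularSolution ν t).differentiableAt
    exact hlog ▸ mul_add _ _ _

lemma add_le_rayleigh {ν r : ℝ} (hr : 0 ≤ r) (hv : IsTestFunction V φ r v)
    (hW : ∀ t ∈ Icc 0 r, regularSolution (fun y => φ y ^ 2) ν t ≠ 0) :
    c + ν ≤ Rayleigh V v r := by
  have hsq : IntervalIntegrable (fun t => v t ^ 2) volume 0 r :=
    (hv.contDiff.continuous.pow 2).intervalIntegrable _ _
  have henergy : IntervalIntegrable (fun t => deriv v t ^ 2 + V t * v t ^ 2) volume 0 r :=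
    ((hv.contDiff.continuous_deriv_one.pow 2).intervalIntegrable _ _).add hv.intervalIntegrable
  have hsplit : ∀ t, deriv v t ^ 2 + (V t - (c + ν)) * v t ^ 2 =
      deriv v t ^ 2 + V t * v t ^ 2 - (c + ν) * v t ^ 2 := fun t => by ring
  have hjacobi : 0 ≤ ∫ t in (0 : ℝ)..r, (deriv v t ^ 2 + (V t - (c + ν)) * v t ^ 2) :=
    integral_deriv_sq_add_mul_sq_nonneg (u := shootingSolution φ ν) hr
      (fun t ht => mul_ne_zero (hφ.pos t ht.1).ne' (hW t (Ioo_subset_Icc_self ht)))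
      (fun t _ => (hφ.hasDerivAt_shootingSolution ν t).differentiableAt)
      (fun t ht => hφ.hasDerivAt_deriv_shootingSolution ν ht.1)
      (fun t _ => hv.contDiff.differentiable one_ne_zero t) hv.apply_zero hv.apply_right
      (hφ.continuousOn_sq_mul_logDeriv_shootingSolution hv hW)
      (by simpa only [hsplit] using henergy.sub (hsq.const_mul (c + ν)))
  simp only [hsplit] at hjacobi
  rw [intervalIntegral.integral_sub henergy (hsq.const_mul _),
    intervalIntegral.integral_const_mul, sub_nonneg] at hjacobi
  rwa [Rayleigh, le_div_iff₀ hv.integral_sq_pos]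

lemma exists_isDirichletEigenvalue_le {r B : ℝ} (hr : 0 < r) (hv : IsTestFunction V φ r v)
    (hB : Rayleigh V v r < B) : ∃ μ ≤ B, IsDirichletEigenvalue V r μ := by
  have hp := hφ.isSingularWeight_sq
  have hc : c ≤ Rayleigh V v r := by
    simpa using hφ.add_le_rayleigh (ν := 0) hr.le hv fun t _ => by simp [hp.regularSolution_eq 0 t]
  obtain ⟨t, ht, hWt⟩ : ∃ t ∈ Icc 0 r, regularSolution (fun y => φ y ^ 2) (B - c) t = 0 := by
    by_contra! hW
    linarith [hφ.add_le_rayleigh hr.le hv hW]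
  obtain ⟨ν, hν, hzero⟩ := hp.exists_regularSolution_eq_zero (by linarith) ht hWt.le
  exact ⟨c + ν, by linarith, hφ.isDirichletEigenvalue_of_regularSolution_eq_zero hr hzero⟩

end IsReferenceSolution

/-- The powers `sinh ^ s` on the positive half-line, extended by zero to the left. -/
noncomputable def sinhPow (s t : ℝ) : ℝ :=
  Real.sinh (max t 0) ^ s

lemma sinhPow_of_pos (s : ℝ) {t : ℝ} (ht : 0 < t) : sinhPow s t = Real.sinh t ^ s := by
  rw [sinhPow, max_eq_left ht.le]

lemma sinhPow_of_nonpos {s t : ℝ} (hs : s ≠ 0) (ht : t ≤ 0) : sinhPow s t = 0 := by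
  rw [sinhPow, max_eq_right ht, Real.sinh_zero, Real.zero_rpow hs]

lemma sinhPow_pos (s : ℝ) {t : ℝ} (ht : 0 < t) : 0 < sinhPow s t := by
  rw [sinhPow_of_pos s ht]
  exact Real.rpow_pos_of_pos (Real.sinh_pos_iff.2 ht) s

lemma sinhPow_sub_one (s : ℝ) {t : ℝ} (ht : 0 < t) :
    sinhPow (s - 1) t = sinhPow s t / Real.sinh t := by
  rw [sinhPow_of_pos _ ht, sinhPow_of_pos _ ht, Real.rpow_sub_one (Real.sinh_pos_iff.2 ht).ne']

lemma monotone_sinhPow {s : ℝ} (hs : 0 ≤ s) : Monotone (sinhPow s) := fun t₁ _ ht =>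
  Real.rpow_le_rpow (Real.sinh_nonneg_iff.2 (le_max_right t₁ 0))
    (Real.sinh_le_sinh.2 (max_le_max_right 0 ht)) hs

lemma continuous_sinhPow {s : ℝ} (hs : 0 ≤ s) : Continuous (sinhPow s) :=
  (Real.continuous_sinh.comp (continuous_id.max continuous_const)).rpow_const fun _ => .inr hs

lemma hasDerivAt_sinhPow_of_pos (s : ℝ) {t : ℝ} (ht : 0 < t) :
    HasDerivAt (sinhPow s) (s * Real.cosh t * sinhPow (s - 1) t) t := by
  have h := (Real.hasDerivAt_sinh t).rpow_const (p := s) (.inl (Real.sinh_pos_iff.2 ht).ne')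
  rw [← sinhPow_of_pos (s - 1) ht, mul_comm (Real.cosh t)] at h
  refine h.congr_of_eventuallyEq ?_
  filter_upwards [Ioi_mem_nhds ht] with x hx using sinhPow_of_pos s hx

lemma hasDerivAt_sinhPow {s : ℝ} (hs : 1 < s) (t : ℝ) :
    HasDerivAt (sinhPow s) (s * Real.cosh t * sinhPow (s - 1) t) t := by
  have hne : ∀ y ≠ 0, HasDerivAt (sinhPow s) (s * Real.cosh y * sinhPow (s - 1) y) y := by
    intro y hy
    rcases hy.lt_or_gt with hneg | hpos
    · rw [sinhPow_of_nonpos (by linarith) hneg.le, mul_zero]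
      refine (hasDerivAt_const y (0 : ℝ)).congr_of_eventuallyEq ?_
      filter_upwards [Iio_mem_nhds hneg] with x hx
      exact sinhPow_of_nonpos (by linarith) (le_of_lt hx)
    · exact hasDerivAt_sinhPow_of_pos s hpos
  have hcont := continuous_sinhPow (s := s - 1) (by linarith)
  exact hasDerivAt_of_hasDerivAt_of_ne' hne (continuous_sinhPow (by linarith)).continuousAt
    (Continuous.continuousAt (by fun_prop)) t

lemma deriv_sinhPow {s : ℝ} (hs : 1 < s) :
    deriv (sinhPow s) = fun t => s * Real.cosh t * sinhPow (s - 1) t :=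
  funext fun t => (hasDerivAt_sinhPow hs t).deriv

/-- `sinh ^ s` solves the equation because `(sinh ^ s)'' = (s² + s (s - 1) / sinh²) sinh ^ s`. -/
lemma isReferenceSolution_sinhPow (a : ℝ) {s : ℝ} (hs : 1 < s) :
    IsReferenceSolution (sinhPotential a (s * (s - 1))) (a - s ^ 2) (sinhPow s) where
  contDiff := by
    have hcont := continuous_sinhPow (s := s - 1) (by linarith)
    refine contDiff_one_iff_deriv.2
      ⟨fun t => (hasDerivAt_sinhPow hs t).differentiableAt, ?_⟩
    rw [deriv_sinhPow hs]
    fun_prop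
  eq_zero _ ht := sinhPow_of_nonpos (by linarith) ht
  pos _ ht := sinhPow_pos s ht
  monotone := monotone_sinhPow (by linarith)
  hasDerivAt_deriv t ht := by
    rw [deriv_sinhPow hs]
    convert! ((Real.hasDerivAt_cosh t).const_mul s).mul (hasDerivAt_sinhPow_of_pos (s - 1) ht)
      using 1
    have := (Real.sinh_pos_iff.2 ht).ne'
    simp only [sinhPow_sub_one _ ht, sinhPotential]
    field_simp
    rw [Real.cosh_sq]
    ring

lemma logDeriv_sinhPow {s t : ℝ} (hs : 1 < s) (ht : 0 < t) :
    logDeriv (sinhPow s) t = s * Real.cosh t / Real.sinh t := by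
  have := (sinhPow_pos s ht).ne'
  simp only [logDeriv_apply, deriv_sinhPow hs, sinhPow_sub_one s ht]
  field_simp

lemma continuousOn_sin_sq_div_sinh (ω : ℝ) :
    ContinuousOn (fun t => Real.sin (ω * t) ^ 2 / Real.sinh t) (Ici 0) := by
  intro t ht
  rcases (mem_Ici.1 ht).eq_or_lt with rfl | hpos
  · have hlim : Tendsto (fun t : ℝ => ω ^ 2 * t) (𝓝[≥] 0) (𝓝 0) :=
      (Continuous.tendsto' (by fun_prop) _ _ (by simp)).mono_left nhdsWithin_le_nhds
    rw [ContinuousWithinAt, Real.sinh_zero, div_zero]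
    refine squeeze_zero' ?_ ?_ hlim <;> filter_upwards [self_mem_nhdsWithin] with t ht
    · exact div_nonneg (sq_nonneg _) (Real.sinh_nonneg_iff.2 ht)
    · have hle : t ≤ Real.sinh t := Real.self_le_sinh_iff.2 ht
      refine div_le_of_le_mul₀ (ht.trans hle) (mul_nonneg (sq_nonneg ω) ht) ?_
      calc Real.sin (ω * t) ^ 2 ≤ (ω * t) ^ 2 := Real.sin_sq_le_sq
        _ = ω ^ 2 * t * t := by ring
        _ ≤ ω ^ 2 * t * Real.sinh t := by
          have := mem_Ici.1 ht
          gcongr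
  · exact (ContinuousAt.div (by fun_prop) (by fun_prop)
      (Real.sinh_pos_iff.2 hpos).ne').continuousWithinAt

lemma sin_pi_div_mul_self {r : ℝ} (hr : r ≠ 0) : Real.sin (Real.pi / r * r) = 0 := by
  rw [div_mul_cancel₀ _ hr, Real.sin_pi]

lemma isTestFunction_sin (a b : ℝ) {r s : ℝ} (hr : 0 < r) (hs : 1 < s) :
    IsTestFunction (sinhPotential a b) (sinhPow s) r (fun t => Real.sin (Real.pi / r * t)) where
  contDiff := by fun_prop
  apply_zero := by rw [mul_zero, Real.sin_zero]
  apply_right := sin_pi_div_mul_self hr.ne'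
  intervalIntegrable := intervalIntegrable_sinhPotential_mul_sin_sq a b _ hr.le
  integral_sq_pos := by
    rw [integral_sin_pi_div_mul_sq hr.ne']
    positivity
  continuousOn_sq_mul_logDeriv := by
    have hcosh : Continuous fun t => s * Real.cosh t := by fun_prop
    refine (hcosh.continuousOn.mul ((continuousOn_sin_sq_div_sinh (Real.pi / r)).mono
      Icc_subset_Ici_self)).congr fun t ht => ?_
    rcases ht.1.eq_or_lt with rfl | hpos
    · simp
    · simp only [logDeriv_sinhPow hs hpos, Pi.mul_apply]
      ring

lemma isDirichletEigenvalue_const (a : ℝ) {r : ℝ} (hr : 0 < r) :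
    IsDirichletEigenvalue (fun _ => a) r (a + Real.pi ^ 2 / r ^ 2) := by
  have hderiv : deriv (fun t => Real.sin (Real.pi / r * t)) =
      fun t => Real.pi / r * Real.cos (Real.pi / r * t) :=
    funext fun t => (hasDerivAt_sin_const_mul _ t).deriv
  have hderiv2 : ∀ t, HasDerivAt (fun t => Real.pi / r * Real.cos (Real.pi / r * t))
      (-(Real.pi / r) ^ 2 * Real.sin (Real.pi / r * t)) t := by
    intro t
    convert! (((hasDerivAt_id t).const_mul (Real.pi / r)).cos).const_mul (Real.pi / r) using 1
    simp only [id]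
    ring
  have hmid : Real.sin (Real.pi / r * (r / 2)) = 1 := by
    rw [← mul_div_assoc, div_mul_cancel₀ _ hr.ne', Real.sin_pi_div_two]
  refine ⟨fun t => Real.sin (Real.pi / r * t),
    ⟨r / 2, ⟨by positivity, by linarith⟩, hmid.trans_ne one_ne_zero⟩,
    by fun_prop, by fun_prop, ?_, fun t _ => ?_, by simp,
    sin_pi_div_mul_self hr.ne', fun t _ => ?_⟩
  · rw [hderiv]
    fun_prop
  · rw [hderiv]
    exact (hderiv2 t).differentiableAt
  · rw [hderiv, (hderiv2 t).deriv]
    ring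

lemma exists_one_lt_mul_sub_one_eq {b : ℝ} (hb : 0 < b) : ∃ s > 1, s * (s - 1) = b := by
  refine ⟨(1 + √(1 + 4 * b)) / 2, ?_, ?_⟩
  · have : 1 < √(1 + 4 * b) := Real.lt_sqrt_of_sq_lt (by linarith)
    linarith
  · have := Real.sq_sqrt (show 0 ≤ 1 + 4 * b by linarith)
    linarith

lemma sinhPotential_zero_right (a : ℝ) : sinhPotential a 0 = fun _ => a := by
  funext t
  rw [sinhPotential, zero_div, add_zero]

lemma exists_isDirichletEigenvalue_sinhPotential_le (a : ℝ) {b r : ℝ} (hb : 0 ≤ b) (hr : 0 < r) :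
    ∃ μ ≤ a + Real.pi ^ 2 / r ^ 2 + b * Real.pi ^ 4 / (3 * r ^ 3),
      IsDirichletEigenvalue (sinhPotential a b) r μ := by
  rcases hb.eq_or_lt with rfl | hb
  · exact ⟨a + Real.pi ^ 2 / r ^ 2, by simp,
      sinhPotential_zero_right a ▸ isDirichletEigenvalue_const a hr⟩
  · have hlt := rayleigh_sinhPotential_sin_lt a hb hr
    obtain ⟨s, hs, rfl⟩ := exists_one_lt_mul_sub_one_eq hb
    exact (isReferenceSolution_sinhPow a hs).exists_isDirichletEigenvalue_le hr
      (isTestFunction_sin a _ hr hs) hlt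

theorem rayleigh_bound_Valpha_general (a : ℝ) {b r : ℝ} (hb : 0 ≤ b) (hr : 0 < r) :
    Rayleigh (sinhPotential a b) (fun t => Real.sin (Real.pi / r * t)) r
      ≤ a + Real.pi ^ 2 / r ^ 2 + b * Real.pi ^ 4 / (3 * r ^ 3) ∧
    (0 < b →
      Rayleigh (sinhPotential a b) (fun t => Real.sin (Real.pi / r * t)) r
        < a + Real.pi ^ 2 / r ^ 2 + b * Real.pi ^ 4 / (3 * r ^ 3)) ∧
    ∃ μ ≤ a + Real.pi ^ 2 / r ^ 2 + b * Real.pi ^ 4 / (3 * r ^ 3),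
      IsDirichletEigenvalue (sinhPotential a b) r μ := by
  refine ⟨?_, fun hb => rayleigh_sinhPotential_sin_lt a hb hr,
    exists_isDirichletEigenvalue_sinhPotential_le a hb hr⟩
  rcases hb.eq_or_lt with rfl | hb
  · simp [rayleigh_sinhPotential_sin a 0 hr]
  · exact (rayleigh_sinhPotential_sin_lt a hb hr).le

/-- For `n ≥ 2`, `α ≥ 0`, `r > 0` and `v(t) = sin(πt/r)`, the Rayleigh quotient of `v` for
the potential `V_α` is at most `(n−1)²/4 + π²/r² + (n−1)απ⁴/(12r³)`, with strict inequality
when `α > 0`; consequently the first Dirichlet eigenvalue `λ₁^α` of `-d²/dt² + V_α` on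
`[0, r]` satisfies the same bound. -/
theorem rayleigh_bound_Valpha (n : ℕ) (hn : 2 ≤ n) (α r : ℝ) (hα : 0 ≤ α) (hr : 0 < r) :
    Rayleigh (Valpha n α) (fun t => Real.sin (Real.pi * t / r)) r
      ≤ ((n : ℝ) - 1) ^ 2 / 4 + Real.pi ^ 2 / r ^ 2
        + ((n : ℝ) - 1) * α * Real.pi ^ 4 / (12 * r ^ 3) ∧
    (0 < α →
      Rayleigh (Valpha n α) (fun t => Real.sin (Real.pi * t / r)) r
        < ((n : ℝ) - 1) ^ 2 / 4 + Real.pi ^ 2 / r ^ 2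
          + ((n : ℝ) - 1) * α * Real.pi ^ 4 / (12 * r ^ 3)) ∧
    ∀ lam : ℝ, IsDirichletEigenvalue (Valpha n α) r lam →
      (∀ μ : ℝ, IsDirichletEigenvalue (Valpha n α) r μ → lam ≤ μ) →
      lam ≤ ((n : ℝ) - 1) ^ 2 / 4 + Real.pi ^ 2 / r ^ 2
        + ((n : ℝ) - 1) * α * Real.pi ^ 4 / (12 * r ^ 3) := by
  have hn' : (0 : ℝ) < n - 1 := sub_pos.2 (Nat.one_lt_cast.2 hn)
  have hbound : (n - 1) * α * Real.pi ^ 4 / (12 * r ^ 3) =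
      (n - 1) * α / 4 * Real.pi ^ 4 / (3 * r ^ 3) := by ring
  obtain ⟨hle, hlt, μ, hμ_le, hμ⟩ := rayleigh_bound_Valpha_general ((n - 1) ^ 2 / 4)
    (b := (n - 1) * α / 4) (by positivity) hr
  simp only [Valpha_eq_sinhPotential, mul_div_right_comm Real.pi, hbound]
  exact ⟨hle, fun hα => hlt (by positivity), fun lam _ hlam => (hlam μ hμ).trans hμ_le⟩
end

section
/- The improper integral ∫₀^∞ (t/sinh(t))² dt equals π²/6. -/
/-!
Summing `∑ n rⁿ = r / (1 - r)²` at `r = e⁻²ᶻ` expands `1 / sinh² z` as `∑ 4 n e⁻²ⁿᶻ`. Against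
`t ^ (s - 1)` the `n`-th exponential integrates to `Γ(s) / (2 n) ^ s`, so the Mellin transform of
`1 / sinh²` is a Dirichlet series summing to `2 ^ (2 - s) Γ(s) ζ(s - 1)`. The integral of
`(t / sinh t)²` is its value at `s = 3`, where `ζ(2) = π² / 6` appears.
-/

open Complex Set

lemma inv_sinh_sq_eq_exp_div_one_sub_exp_sq (z : ℂ) :
    (sinh z ^ 2)⁻¹ = 4 * (exp (-(2 * z)) / (1 - exp (-(2 * z))) ^ 2) := by
  have sinh_eq : sinh z = (1 - exp (-z) ^ 2) / (2 * exp (-z)) := by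
    rw [sinh, exp_neg]
    field_simp
  have exp_eq : exp (-(2 * z)) = exp (-z) ^ 2 := by
    rw [← exp_nat_mul]
    ring_nf
  rw [sinh_eq, exp_eq, div_pow, inv_div]
  ring

lemma hasSum_inv_sinh_sq {z : ℂ} (hz : 0 < z.re) :
    HasSum (fun n : ℕ ↦ 4 * n * exp (-(2 * n) * z)) (sinh z ^ 2)⁻¹ := by
  have norm_exp_lt_one : ‖exp (-(2 * z))‖ < 1 := by
    simpa [norm_exp] using hz
  rw [inv_sinh_sq_eq_exp_div_one_sub_exp_sq]
  refine ((hasSum_coe_mul_geometric_of_norm_lt_one norm_exp_lt_one).mul_left 4).congr_fun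
    fun n ↦ ?_
  rw [← exp_nat_mul]
  ring_nf

lemma four_mul_div_two_mul_natCast_cpow {s : ℂ} (hs : s ≠ 1) (n : ℕ) :
    4 * n / (2 * n : ℂ) ^ s = 2 ^ (2 - s) * (1 / (n : ℂ) ^ (s - 1)) := by
  rcases eq_or_ne n 0 with rfl | hn
  · simp [zero_cpow (sub_ne_zero.mpr hs)]
  have hn' : (n : ℂ) ≠ 0 := Nat.cast_ne_zero.mpr hn
  have two_mul_cpow : (2 * n : ℂ) ^ s = 2 ^ s * n ^ s := mod_cast natCast_mul_natCast_cpow 2 n s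
  rw [two_mul_cpow, cpow_sub _ _ two_ne_zero, cpow_sub _ _ hn', cpow_one, cpow_ofNat]
  field_simp
  norm_num

lemma summable_four_mul_div_two_mul_natCast_cpow {s : ℂ} (hs : 2 < s.re) :
    Summable fun n : ℕ ↦ 4 * n / (2 * n : ℂ) ^ s := by
  have hs_ne_one : s ≠ 1 := by rintro rfl; norm_num at hs
  simp_rw [four_mul_div_two_mul_natCast_cpow hs_ne_one]
  refine (summable_one_div_nat_cpow.mpr ?_).mul_left _
  rw [sub_re, one_re]
  linarith

theorem mellin_inv_sinh_sq {s : ℂ} (hs : 2 < s.re) :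
    mellin (fun t ↦ (sinh t ^ 2)⁻¹) s = 2 ^ (2 - s) * Gamma s * riemannZeta (s - 1) := by
  have hs_ne_one : s ≠ 1 := by rintro rfl; norm_num at hs
  have hs_pos : 0 < s.re := by linarith
  have one_lt_re : 1 < (s - 1).re := by rw [sub_re, one_re]; linarith
  have norm_term (n : ℕ) :
      ‖4 * n / (2 * n : ℂ) ^ s‖ = ‖(4 * n : ℂ)‖ / (2 * n : ℝ) ^ s.re := by
    rw [norm_div]
    exact_mod_cast congrArg _ (norm_natCast_cpow_of_re_ne_zero (2 * n) hs_pos.ne')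
  have mellin_sum := hasSum_mellin (a := fun n : ℕ ↦ 4 * n) (p := fun n ↦ 2 * n)
    (F := fun t ↦ (sinh t ^ 2)⁻¹)
    (fun n ↦ by rcases n.eq_zero_or_pos with rfl | hn <;> simp [*]) hs_pos
    (fun t ht ↦ by simpa using hasSum_inv_sinh_sq (z := t) ht)
    ((summable_four_mul_div_two_mul_natCast_cpow hs).norm.congr norm_term)
  calc mellin (fun t ↦ (sinh t ^ 2)⁻¹) s
      = ∑' n : ℕ, Gamma s * (4 * n / (2 * n : ℂ) ^ s) := by
        simpa [mul_div_assoc] using mellin_sum.tsum_eq.symm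
    _ = ∑' n : ℕ, 2 ^ (2 - s) * Gamma s * (1 / (n : ℂ) ^ (s - 1)) := by
        simp_rw [four_mul_div_two_mul_natCast_cpow hs_ne_one, mul_left_comm (Gamma s), mul_assoc]
    _ = 2 ^ (2 - s) * Gamma s * riemannZeta (s - 1) := by
        rw [tsum_mul_left, zeta_eq_tsum_one_div_nat_cpow one_lt_re]

/-- The improper integral `∫₀^∞ (t/sinh t)² dt` equals `π²/6`. -/
theorem integral_sq_div_sinh_sq : ∫ t in Set.Ioi (0:ℝ), (t / Real.sinh t) ^ 2 = Real.pi ^ 2 / 6 := by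
  apply ofReal_injective
  calc ((∫ t in Ioi (0 : ℝ), (t / Real.sinh t) ^ 2 : ℝ) : ℂ)
      = mellin (fun t ↦ (sinh t ^ 2)⁻¹) 3 := by
        rw [← integral_complex_ofReal, mellin]
        norm_num [div_eq_mul_inv, mul_pow]
    _ = 2 ^ (2 - 3 : ℂ) * Gamma 3 * riemannZeta (3 - 1) := mellin_inv_sinh_sq (by norm_num)
    _ = riemannZeta 2 := by norm_num [cpow_neg_one, Gamma_ofNat_eq_factorial]
    _ = ((Real.pi ^ 2 / 6 : ℝ) : ℂ) := by rw [riemannZeta_two]; push_cast; rfl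
end

section
/- Let n ≥ 2 be an integer, r > 0, and λ > 0. Suppose u : [0,r] → ℝ is continuously differentiable on [0,r], twice differentiable on (0,r), satisfies u(t) > 0 for t ∈ [0,r), u'(0) = 0, u(r) = 0, and u''(t) + ((n−1)/tanh(t))·u'(t) + λ·u(t) = 0 for all t ∈ (0,r). Then u'(t) < 0 for all t ∈ (0,r); in particular u is strictly decreasing on [0,r]. -/
/-!
Since `n - 1` times `coth` is the logarithmic derivative of `sinh ^ (n - 1)`, multiplying the
equation by this weight gives `(sinh ^ (n - 1) * u')' = -λ * sinh ^ (n - 1) * u < 0`. Hence the flux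
`sinh ^ (n - 1) * u'` is strictly decreasing; it vanishes at `0`, so it is negative afterwards.
Only the sign of the right-hand side matters, so the argument applies to any strict supersolution
`u'' + α * coth t * u' < 0` with a real exponent `α ≥ 0`.
-/

open Real Set

theorem neg_of_deriv_mul_neg {a b : ℝ} {w v : ℝ → ℝ}
    (hcont : ContinuousOn (w * v) (Ico a b)) (hw : ∀ t ∈ Ioo a b, 0 < w t)
    (hderiv : ∀ t ∈ Ioo a b, deriv (w * v) t < 0) (ha : w a * v a ≤ 0) :
    ∀ t ∈ Ioo a b, v t < 0 := by
  intro t ht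
  have hanti : StrictAntiOn (w * v) (Ico a b) :=
    strictAntiOn_of_deriv_neg (convex_Ico a b) hcont (by rwa [interior_Ico])
  have hlt : w t * v t < w a * v a :=
    hanti (left_mem_Ico.2 (ht.1.trans ht.2)) (Ioo_subset_Ico_self ht) ht.1
  exact neg_of_mul_neg_right (hlt.trans_le ha) (hw t ht).le

theorem hasDerivAt_sinh_rpow (α : ℝ) {t : ℝ} (ht : t ≠ 0) :
    HasDerivAt (fun s ↦ sinh s ^ α) (sinh t ^ α * (α / tanh t)) t := by
  have hsinh : sinh t ≠ 0 := sinh_ne_zero.2 ht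
  refine ((hasDerivAt_sinh t).rpow_const (Or.inl hsinh)).congr_deriv ?_
  rw [rpow_sub_one hsinh, tanh_eq_sinh_div_cosh]
  field_simp

theorem hasDerivAt_sinh_rpow_mul (α : ℝ) {v : ℝ → ℝ} {v' t : ℝ} (ht : t ≠ 0)
    (hv : HasDerivAt v v' t) :
    HasDerivAt ((fun s ↦ sinh s ^ α) * v) (sinh t ^ α * (v' + α / tanh t * v t)) t :=
  ((hasDerivAt_sinh_rpow α ht).mul hv).congr_deriv (by ring)

theorem neg_of_deriv_add_div_tanh_mul_neg {α r : ℝ} (hα : 0 ≤ α) {v : ℝ → ℝ}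
    (hc : ContinuousOn v (Ico 0 r)) (hd : ∀ t ∈ Ioo 0 r, DifferentiableAt ℝ v t)
    (h0 : α = 0 → v 0 ≤ 0) (hv : ∀ t ∈ Ioo 0 r, deriv v t + α / tanh t * v t < 0) :
    ∀ t ∈ Ioo 0 r, v t < 0 := by
  have hpos : ∀ t ∈ Ioo 0 r, 0 < sinh t ^ α := fun t ht ↦ rpow_pos_of_pos (sinh_pos_iff.2 ht.1) α
  have hflux : ∀ t ∈ Ioo 0 r, deriv ((fun s ↦ sinh s ^ α) * v) t < 0 := fun t ht ↦ by
    rw [(hasDerivAt_sinh_rpow_mul α ht.1.ne' (hd t ht).hasDerivAt).deriv]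
    exact mul_neg_of_pos_of_neg (hpos t ht) (hv t ht)
  have hflux_zero : sinh 0 ^ α * v 0 ≤ 0 := by
    rcases eq_or_ne α 0 with rfl | hne
    · simpa using h0 rfl
    · simp [hne]
  have hweight : Continuous fun s ↦ sinh s ^ α := continuous_sinh.rpow_const fun _ ↦ Or.inr hα
  exact neg_of_deriv_mul_neg (hweight.continuousOn.mul hc) hpos hflux hflux_zero

theorem radial_eigenfunction_strictly_decreasing_general {α r : ℝ} (hα : 0 ≤ α) {u : ℝ → ℝ}
    (hc : ContinuousOn u (Icc 0 r)) (hc' : ContinuousOn (deriv u) (Ico 0 r))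
    (hd' : ∀ t ∈ Ioo 0 r, DifferentiableAt ℝ (deriv u) t) (h0 : α = 0 → deriv u 0 ≤ 0)
    (hu : ∀ t ∈ Ioo 0 r, deriv (deriv u) t + α / tanh t * deriv u t < 0) :
    (∀ t ∈ Ioo 0 r, deriv u t < 0) ∧ StrictAntiOn u (Icc 0 r) := by
  have hneg : ∀ t ∈ Ioo 0 r, deriv u t < 0 :=
    neg_of_deriv_add_div_tanh_mul_neg hα hc' hd' h0 hu
  exact ⟨hneg, strictAntiOn_of_deriv_neg (convex_Icc 0 r) hc (by rwa [interior_Icc])⟩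

/-- The first radial Dirichlet eigenfunction of a geodesic ball in `ℍⁿ` is strictly
decreasing: if `u` is continuously differentiable on `[0, r]`, twice differentiable on
`(0, r)`, positive on `[0, r)`, with `u'(0) = 0`, `u(r) = 0`, and satisfies
`u'' + ((n−1)/tanh t)·u' + λ·u = 0` on `(0, r)` with `λ > 0`, then `u' < 0` on `(0, r)`;
in particular `u` is strictly decreasing on `[0, r]`. -/
theorem radial_eigenfunction_strictly_decreasing (n : ℕ) (hn : 2 ≤ n) (r lam : ℝ)
    (hr : 0 < r) (hlam : 0 < lam) (u : ℝ → ℝ)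
    (hc : ContinuousOn u (Set.Icc 0 r))
    (hd : ∀ t ∈ Set.Ioo (0:ℝ) r, DifferentiableAt ℝ u t)
    (hc' : ContinuousOn (deriv u) (Set.Icc 0 r))
    (hd' : ∀ t ∈ Set.Ioo (0:ℝ) r, DifferentiableAt ℝ (deriv u) t)
    (hpos : ∀ t ∈ Set.Ico (0:ℝ) r, 0 < u t)
    (h0 : deriv u 0 = 0) (hrr : u r = 0)
    (hode : ∀ t ∈ Set.Ioo (0:ℝ) r,
      deriv (deriv u) t + (((n : ℝ) - 1) / Real.tanh t) * deriv u t + lam * u t = 0) :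
    (∀ t ∈ Set.Ioo (0:ℝ) r, deriv u t < 0) ∧ StrictAntiOn u (Set.Icc 0 r) := by
  have hα : (0 : ℝ) ≤ n - 1 := sub_nonneg.2 (Nat.one_le_cast.2 (one_le_two.trans hn))
  refine radial_eigenfunction_strictly_decreasing_general hα hc (hc'.mono Ico_subset_Icc_self) hd'
    (fun _ ↦ h0.le) fun t ht ↦ ?_
  linarith [hode t ht, mul_pos hlam (hpos t (Ioo_subset_Ico_self ht))]
end
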